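/- arXiv:2211.00965 — 5 statements merged into one kernel-verified Lean document; each statement's English description precedes it below -/
import Mathlib

section
/- Let ν be a finite positive Borel measure on ℝ and let g : ℝ → ℂ be ν-integrable (so that dμ = g dν is a complex Borel measure of bounded variation). Define the Fourier transform μ̂(t) := ∫_ℝ e^{−itλ} g(λ) dν(λ) for t ∈ ℝ. Assume μ̂ is (Bohr) almost periodic: for every ε > 0 there exist finitely many frequencies λ₁, …, λ_m ∈ ℝ and coefficients c₁, …, c_m ∈ ℂ such that sup_{t∈ℝ} |μ̂(t) − Σ_{j=1}^m c_j e^{−iλ_j t}| ≤ ε. Then μ is pure point: there exists a countable set D ⊆ ℝ such that ∫_{ℝ∖D} |g(λ)| dν(λ) = 0. -/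
open MeasureTheory Filter
open scoped BigOperators

lemma norm_e (x : ℝ) : ‖Complex.exp (-(Complex.I * (x : ℂ)))‖ = 1 := by
  rw [show -(Complex.I * (x : ℂ)) = ((-x : ℝ) : ℂ) * Complex.I by push_cast; ring]
  exact Complex.norm_exp_ofReal_mul_I _

lemma norm_e' (x : ℝ) : ‖Complex.exp (Complex.I * (x : ℂ))‖ = 1 := by
  rw [mul_comm]
  exact Complex.norm_exp_ofReal_mul_I _

lemma int_e {ρ : Measure ℝ} {g : ℝ → ℂ} (hg : Integrable g ρ) (t : ℝ) :
    Integrable (fun l => Complex.exp (-(Complex.I * ((t * l : ℝ) : ℂ))) * g l) ρ := by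
  refine hg.bdd_mul (c := 1) ?_ ?_
  · exact Continuous.aestronglyMeasurable (by fun_prop)
  · exact Eventually.of_forall fun l => (norm_e _).le

lemma uniq_real {ρ : Measure ℝ} [IsFiniteMeasure ρ] {u : ℝ → ℝ} (hu : Integrable u ρ)
    (h : ∀ t : ℝ, ∫ l, Complex.exp (-(Complex.I * ((t * l : ℝ) : ℂ))) * (u l : ℂ) ∂ρ = 0) :
    u =ᵐ[ρ] 0 := by
  wlog hm : Measurable u generalizing u
  · have hae : u =ᵐ[ρ] hu.1.mk u := hu.1.ae_eq_mk
    refine hae.trans (this (hu.congr hae) (fun t => ?_) hu.1.stronglyMeasurable_mk.measurable)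
    rw [← h t]
    refine integral_congr_ae ?_
    filter_upwards [hae] with l hl
    rw [hl]
  have hp : Measurable fun l => (u l).toNNReal := hm.real_toNNReal
  have hn : Measurable fun l => (-u l).toNNReal := hm.neg.real_toNNReal
  have f1 : ∫⁻ l, ((u l).toNNReal : ENNReal) ∂ρ ≠ ⊤ := by
    have := hu.lintegral_lt_top
    exact this.ne
  have f2 : ∫⁻ l, ((-u l).toNNReal : ENNReal) ∂ρ ≠ ⊤ := by
    have := hu.neg.lintegral_lt_top
    exact this.ne
  have := isFiniteMeasure_withDensity f1
  have := isFiniteMeasure_withDensity f2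
  have key : ρ.withDensity (fun l => ((u l).toNNReal : ENNReal))
      = ρ.withDensity (fun l => ((-u l).toNNReal : ENNReal)) := by
    refine Measure.ext_of_charFun ?_
    funext t
    rw [charFun_apply_real, charFun_apply_real, integral_withDensity_eq_integral_smul hp,
      integral_withDensity_eq_integral_smul hn, ← sub_eq_zero, ← integral_sub, ← h (-t)]
    · refine integral_congr_ae (Eventually.of_forall fun l => ?_)
      simp only [NNReal.smul_def, Real.coe_toNNReal', Complex.real_smul]
      rw [← sub_mul, ← Complex.ofReal_sub]
      have : max (u l) 0 - max (-u l) 0 = u l := by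
        rcases le_total (u l) 0 with h | h
        · rw [max_eq_right h, max_eq_left (by linarith)]; ring
        · rw [max_eq_left h, max_eq_right (by linarith)]; ring
      rw [this, mul_comm]
      congr 2
      push_cast
      ring
    · have := int_e (g := fun l => ((max (u l) 0 : ℝ) : ℂ)) hu.pos_part.ofReal (-t)
      refine this.congr (Eventually.of_forall fun l => ?_)
      simp only [NNReal.smul_def, Real.coe_toNNReal', Complex.real_smul]
      rw [mul_comm]
      congr 2
      push_cast
      ring
    · have := int_e (g := fun l => ((max (-u l) 0 : ℝ) : ℂ)) hu.neg_part.ofReal (-t)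
      refine this.congr (Eventually.of_forall fun l => ?_)
      simp only [NNReal.smul_def, Real.coe_toNNReal', Complex.real_smul]
      rw [mul_comm]
      congr 2
      push_cast
      ring
  rw [withDensity_eq_iff (by fun_prop) (by fun_prop) f1] at key
  filter_upwards [key] with l hl
  have hl' : (u l).toNNReal = (-u l).toNNReal := by exact_mod_cast hl
  have h3 := congrArg (fun x : NNReal => (x : ℝ)) hl'
  simp only [Real.coe_toNNReal'] at h3
  show u l = 0
  rcases le_total (u l) 0 with h | h
  · rw [max_eq_right h, max_eq_left (by linarith)] at h3; linarith
  · rw [max_eq_left h, max_eq_right (by linarith)] at h3; linarith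

lemma uniq_complex {ρ : Measure ℝ} [IsFiniteMeasure ρ] {g : ℝ → ℂ} (hg : Integrable g ρ)
    (h : ∀ t : ℝ, ∫ l, Complex.exp (-(Complex.I * ((t * l : ℝ) : ℂ))) * g l ∂ρ = 0) :
    g =ᵐ[ρ] 0 := by
  have hgc : Integrable (fun l => (starRingEnd ℂ) (g l)) ρ :=
    (LinearIsometryEquiv.integrable_comp_iff Complex.conjLIE).2 hg
  have hc : ∀ t : ℝ, ∫ l, Complex.exp (-(Complex.I * ((t * l : ℝ) : ℂ))) *
      (starRingEnd ℂ) (g l) ∂ρ = 0 := by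
    intro t
    have := congrArg (starRingEnd ℂ) (h (-t))
    rw [← integral_conj, map_zero] at this
    rw [← this]
    refine integral_congr_ae (Eventually.of_forall fun l => ?_)
    simp only [map_mul, ← Complex.exp_conj, map_neg, Complex.conj_I, Complex.conj_ofReal]
    congr 2
    push_cast
    ring
  have h1 : (fun l => (g l).re) =ᵐ[ρ] 0 := by
    refine uniq_real hg.re fun t => ?_
    have e : ∀ l, Complex.exp (-(Complex.I * ((t * l : ℝ) : ℂ))) * ((g l).re : ℂ)
        = (1/2 : ℂ) * (Complex.exp (-(Complex.I * ((t * l : ℝ) : ℂ))) * g l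
          + Complex.exp (-(Complex.I * ((t * l : ℝ) : ℂ))) * (starRingEnd ℂ) (g l)) := by
      intro l
      rw [Complex.re_eq_add_conj]; ring
    simp_rw [e]
    rw [integral_const_mul, integral_add (int_e hg t) (int_e hgc t), h, hc]
    simp
  have h2 : (fun l => (g l).im) =ᵐ[ρ] 0 := by
    refine uniq_real hg.im fun t => ?_
    have e : ∀ l, Complex.exp (-(Complex.I * ((t * l : ℝ) : ℂ))) * ((g l).im : ℂ)
        = (1/(2 * Complex.I) : ℂ) * (Complex.exp (-(Complex.I * ((t * l : ℝ) : ℂ))) * g l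
          - Complex.exp (-(Complex.I * ((t * l : ℝ) : ℂ))) * (starRingEnd ℂ) (g l)) := by
      intro l
      rw [Complex.im_eq_sub_conj]; ring
    simp_rw [e]
    rw [integral_const_mul, integral_sub (int_e hg t) (int_e hgc t), h, hc]
    simp
  filter_upwards [h1, h2] with l a b
  exact Complex.ext a b

lemma geom_avg (w : ℂ) (hw : ‖w‖ = 1) (h1 : w ≠ 1) :
    Tendsto (fun N : ℕ => (N : ℂ)⁻¹ * ∑ k ∈ Finset.range N, w ^ k) atTop (nhds 0) := by
  have h0 : Tendsto (fun N : ℕ => (N : ℝ)⁻¹ * (2 / ‖w - 1‖)) atTop (nhds 0) := by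
    simpa using (tendsto_inv_atTop_nhds_zero_nat (𝕜 := ℝ)).mul_const (2 / ‖w - 1‖)
  refine squeeze_zero_norm (fun N => ?_) h0
  rw [geom_sum_eq h1, norm_mul, norm_inv, Complex.norm_natCast, norm_div]
  gcongr
  refine (norm_sub_le _ _).trans ?_
  rw [norm_pow, hw]; norm_num

lemma mean_zero {ρ : Measure ℝ} [NullSingletonClass ρ] {g : ℝ → ℂ} (hg : Integrable g ρ) (s ξ : ℝ) :
    Tendsto (fun N : ℕ => (N : ℂ)⁻¹ * ∑ k ∈ Finset.range N,
      (∫ l, Complex.exp (-(Complex.I * (((s + k) * l : ℝ) : ℂ))) * g l ∂ρ)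
        * Complex.exp (Complex.I * ((ξ * k : ℝ) : ℂ))) atTop (nhds 0) := by
  have e : ∀ N : ℕ, (N : ℂ)⁻¹ * ∑ k ∈ Finset.range N,
      (∫ l, Complex.exp (-(Complex.I * (((s + k) * l : ℝ) : ℂ))) * g l ∂ρ)
        * Complex.exp (Complex.I * ((ξ * k : ℝ) : ℂ))
      = ∫ l, ((N : ℂ)⁻¹ * ∑ k ∈ Finset.range N, Complex.exp (Complex.I * ((ξ - l : ℝ) : ℂ)) ^ k)
        * (Complex.exp (-(Complex.I * ((s * l : ℝ) : ℂ))) * g l) ∂ρ := by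
    intro N
    simp_rw [← integral_mul_const]
    rw [← integral_finsetSum _ fun k _ => (int_e hg _).mul_const _, ← integral_const_mul]
    refine integral_congr_ae (Eventually.of_forall fun l => ?_)
    simp only
    rw [mul_assoc, Finset.sum_mul]
    congr 1
    refine Finset.sum_congr rfl fun k _ => ?_
    rw [← Complex.exp_nat_mul, mul_right_comm, ← Complex.exp_add, ← mul_assoc, ← Complex.exp_add]
    congr 2
    push_cast
    ring
  simp_rw [e]
  rw [← integral_zero ℝ ℂ (μ := ρ)]
  refine tendsto_integral_of_dominated_convergence (fun l => ‖g l‖) (fun N => ?_) hg.norm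
    (fun N => Eventually.of_forall fun l => ?_) ?_
  · exact AEStronglyMeasurable.mul (Continuous.aestronglyMeasurable (by fun_prop)) (int_e hg s).1
  · rw [norm_mul, norm_mul (Complex.exp _), norm_e, one_mul]
    refine mul_le_of_le_one_left (norm_nonneg _) ?_
    rw [norm_mul, norm_inv, Complex.norm_natCast]
    have : ‖∑ k ∈ Finset.range N, Complex.exp (Complex.I * ((ξ - l : ℝ) : ℂ)) ^ k‖ ≤ N := by
      refine (norm_sum_le _ _).trans ?_
      simp only [norm_pow, norm_e', one_pow]
      simp
    exact inv_mul_le_one_of_le₀ this (Nat.cast_nonneg _)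
  · have hc : (Set.range fun n : ℤ => ξ - n * (2 * Real.pi)).Countable := Set.countable_range _
    have : ∀ᵐ l ∂ρ, l ∉ Set.range fun n : ℤ => ξ - n * (2 * Real.pi) :=
      hc.ae_notMem ρ
    filter_upwards [this] with l hl
    have hw : Complex.exp (Complex.I * ((ξ - l : ℝ) : ℂ)) ≠ 1 := by
      intro hh
      rw [Complex.exp_eq_one_iff] at hh
      obtain ⟨n, hn⟩ := hh
      apply hl
      refine ⟨n, ?_⟩
      have h2 : ((ξ - l : ℝ) : ℂ) = ((n * (2 * Real.pi) : ℝ) : ℂ) := by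
        apply mul_left_cancel₀ Complex.I_ne_zero
        rw [hn]; push_cast; ring
      have h3 : ξ - l = n * (2 * Real.pi) := by exact_mod_cast h2
      simp only
      linarith
    simpa using (geom_avg _ (norm_e' _) hw).mul_const
      (Complex.exp (-(Complex.I * ((s * l : ℝ) : ℂ))) * g l)

lemma sq_mean (a : ℕ → ℂ) (C : ℝ) (hC : ∀ k, ‖a k‖ ≤ C)
    (hm : ∀ ξ : ℝ, Tendsto (fun N : ℕ => (N : ℂ)⁻¹ * ∑ k ∈ Finset.range N,
      a k * Complex.exp (Complex.I * ((ξ * k : ℝ) : ℂ))) atTop (nhds 0))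
    (hap : ∀ ε : ℝ, 0 < ε → ∃ (m : ℕ) (lam : Fin m → ℝ) (c : Fin m → ℂ), ∀ k : ℕ,
      ‖a k - ∑ j : Fin m, c j * Complex.exp (-(Complex.I * ((lam j * k : ℝ) : ℂ)))‖ ≤ ε) :
    Tendsto (fun N : ℕ => (N : ℝ)⁻¹ * ∑ k ∈ Finset.range N, ‖a k‖ ^ 2) atTop (nhds 0) := by
  have hC0 : 0 ≤ C := (norm_nonneg _).trans (hC 0)
  rw [Metric.tendsto_atTop]
  intro η hη
  obtain ⟨m, lam, c, hP⟩ := hap (η / (2 * (C + 1))) (by positivity)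
  set P : ℕ → ℂ := fun k => ∑ j : Fin m, c j * Complex.exp (-(Complex.I * ((lam j * k : ℝ) : ℂ)))
    with hPdef
  have hlim : Tendsto (fun N : ℕ => (N : ℂ)⁻¹ * ∑ k ∈ Finset.range N,
      a k * (starRingEnd ℂ) (P k)) atTop (nhds 0) := by
    have h1 : Tendsto (fun N : ℕ => ∑ j : Fin m, (starRingEnd ℂ) (c j) *
        ((N : ℂ)⁻¹ * ∑ k ∈ Finset.range N,
      a k * Complex.exp (Complex.I * ((lam j * k : ℝ) : ℂ)))) atTop (nhds 0) := by
      rw [show (0 : ℂ) = ∑ j : Fin m, (starRingEnd ℂ) (c j) * 0 by simp]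
      exact tendsto_finsetSum _ fun j _ => (hm (lam j)).const_mul _
    refine h1.congr fun N => ?_
    simp only [hPdef, map_sum, map_mul, ← Complex.exp_conj, map_neg, Complex.conj_I,
      Complex.conj_ofReal, Finset.mul_sum]
    rw [Finset.sum_comm]
    refine Finset.sum_congr rfl fun k _ => Finset.sum_congr rfl fun j _ => ?_
    rw [neg_mul, neg_neg]
    ring
  obtain ⟨N₀, hN₀⟩ := (Metric.tendsto_atTop.1 hlim) (η / 2) (by positivity)
  refine ⟨N₀, fun N hN => ?_⟩
  have h2 := hN₀ N hN
  rw [dist_zero_right] at h2 ⊢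
  have e : (((N : ℝ)⁻¹ * ∑ k ∈ Finset.range N, ‖a k‖ ^ 2 : ℝ) : ℂ)
      = (N : ℂ)⁻¹ * ∑ k ∈ Finset.range N, a k * (starRingEnd ℂ) (P k)
        + (N : ℂ)⁻¹ * ∑ k ∈ Finset.range N, a k * (starRingEnd ℂ) (a k - P k) := by
    rw [← mul_add, ← Finset.sum_add_distrib]
    push_cast
    congr 1
    refine Finset.sum_congr rfl fun k _ => ?_
    rw [← mul_add, map_sub, add_sub_cancel, Complex.mul_conj']
  rw [← Complex.norm_real, e]
  have h3 : ‖(N : ℂ)⁻¹ * ∑ k ∈ Finset.range N, a k * (starRingEnd ℂ) (a k - P k)‖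
      ≤ C * (η / (2 * (C + 1))) := by
    rw [norm_mul, norm_inv, Complex.norm_natCast]
    have : ‖∑ k ∈ Finset.range N, a k * (starRingEnd ℂ) (a k - P k)‖
        ≤ N * (C * (η / (2 * (C + 1)))) := by
      refine (norm_sum_le_of_le _ (fun k _ => ?_)).trans (b := ∑ k ∈ Finset.range N, C * (η / (2 * (C + 1)))) ?_
      · rw [norm_mul, RCLike.norm_conj]
        exact mul_le_mul (hC k) (hP k) (norm_nonneg _) hC0
      · simp
    rcases Nat.eq_zero_or_pos N with rfl | hpos
    · simp; positivity
    · have : (0 : ℝ) < N := by exact_mod_cast hpos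
      rw [inv_mul_le_iff₀ this]
      assumption
  have h4 : C * (η / (2 * (C + 1))) < η / 2 := by
    rw [show C * (η / (2 * (C + 1))) = (η / 2) * (C / (C + 1)) by field_simp]
    refine mul_lt_of_lt_one_right (by positivity) ?_
    rw [div_lt_one (by positivity)]; linarith
  calc _ ≤ _ := norm_add_le _ _
    _ < η := by linarith

lemma translates (f : ℝ → ℂ)
    (hap : ∀ ε : ℝ, 0 < ε → ∃ (m : ℕ) (lam : Fin m → ℝ) (c : Fin m → ℂ), ∀ t : ℝ,
      ‖f t - ∑ j : Fin m, c j * Complex.exp (-(Complex.I * ((lam j * t : ℝ) : ℂ)))‖ ≤ ε)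
    (η : ℝ) (hη : 0 < η) :
    ∃ F : Finset ℝ, ∀ t : ℝ, ∃ τ ∈ F, ∀ x : ℝ, ‖f (x + t) - f (x + τ)‖ ≤ η := by
  obtain ⟨m, lam, c, hP⟩ := hap (η / 3) (by positivity)
  set z : ℝ → (Fin m → ℂ) := fun t j => Complex.exp (-(Complex.I * ((lam j * t : ℝ) : ℂ))) with hz
  set S : ℝ := ∑ j, ‖c j‖ with hS
  have hS0 : 0 ≤ S := Finset.sum_nonneg fun _ _ => norm_nonneg _
  have htb : TotallyBounded (Set.range z) := by
    refine (isCompact_closedBall (0 : Fin m → ℂ) 1).totallyBounded.subset ?_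
    rintro _ ⟨t, rfl⟩
    rw [mem_closedBall_zero_iff, pi_norm_le_iff_of_nonneg zero_le_one]
    exact fun j => (norm_e _).le
  obtain ⟨u, hus, huf, hu⟩ := (totallyBounded_iff_subset.1 htb) _
    (Metric.dist_mem_uniformity (show 0 < η / (3 * (S + 1)) by positivity))
  have hus2 : ∀ y ∈ u, ∃ t, z t = y := fun y hy => hus hy
  choose! r hr using hus2
  refine ⟨huf.toFinset.image r, fun t => ?_⟩
  have ht := hu ⟨t, rfl⟩
  simp only [Set.mem_iUnion] at ht
  obtain ⟨y, hy, hty⟩ := ht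
  refine ⟨r y, Finset.mem_image.2 ⟨y, by simpa using hy, rfl⟩, fun x => ?_⟩
  have hd : dist (z t) (z (r y)) < η / (3 * (S + 1)) := by rw [hr y hy]; exact hty
  have hj : ∀ j, ‖z t j - z (r y) j‖ ≤ η / (3 * (S + 1)) := fun j => by
    rw [← dist_eq_norm]; exact (dist_le_pi_dist _ _ j).trans hd.le
  have hmid : ‖(∑ j : Fin m, c j * Complex.exp (-(Complex.I * ((lam j * (x + t) : ℝ) : ℂ))))
      - ∑ j : Fin m, c j * Complex.exp (-(Complex.I * ((lam j * (x + r y) : ℝ) : ℂ)))‖ ≤ η / 3 := by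
    rw [← Finset.sum_sub_distrib]
    refine (norm_sum_le_of_le _ (fun j _ => ?_)).trans
      (b := ∑ j, ‖c j‖ * (η / (3 * (S + 1)))) ?_
    · have : ∀ t : ℝ, Complex.exp (-(Complex.I * ((lam j * (x + t) : ℝ) : ℂ)))
          = Complex.exp (-(Complex.I * ((lam j * x : ℝ) : ℂ))) * z t j := by
        intro t
        rw [hz, ← Complex.exp_add]; congr 1; push_cast; ring
      rw [this, this, ← mul_sub, ← mul_sub, norm_mul, norm_mul, norm_e, one_mul]
      gcongr
      exact hj j
    · rw [← Finset.sum_mul, ← hS, show S * (η / (3 * (S + 1))) = (η / 3) * (S / (S + 1)) by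
        field_simp]
      refine mul_le_of_le_one_right (by positivity) ?_
      rw [div_le_one (by positivity)]; linarith
  have h1 := hP (x + t)
  have h2 := hP (x + r y)
  rw [norm_sub_rev] at h2
  calc _ = ‖(f (x + t) - ∑ j : Fin m, c j * Complex.exp (-(Complex.I * ((lam j * (x + t) : ℝ) : ℂ))))
      + ((∑ j : Fin m, c j * Complex.exp (-(Complex.I * ((lam j * (x + t) : ℝ) : ℂ))))
      - ∑ j : Fin m, c j * Complex.exp (-(Complex.I * ((lam j * (x + r y) : ℝ) : ℂ))))
      + ((∑ j : Fin m, c j * Complex.exp (-(Complex.I * ((lam j * (x + r y) : ℝ) : ℂ)))) - f (x + r y))‖ := by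
        congr 1; ring
    _ ≤ _ := norm_add₃_le
    _ ≤ η := by linarith

lemma ap_zero (f : ℝ → ℂ) (C : ℝ) (hC : ∀ t, ‖f t‖ ≤ C)
    (hm : ∀ s ξ : ℝ, Tendsto (fun N : ℕ => (N : ℂ)⁻¹ * ∑ k ∈ Finset.range N,
      f (s + k) * Complex.exp (Complex.I * ((ξ * k : ℝ) : ℂ))) atTop (nhds 0))
    (hap : ∀ ε : ℝ, 0 < ε → ∃ (m : ℕ) (lam : Fin m → ℝ) (c : Fin m → ℂ), ∀ t : ℝ,
      ‖f t - ∑ j : Fin m, c j * Complex.exp (-(Complex.I * ((lam j * t : ℝ) : ℂ)))‖ ≤ ε)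
    (s : ℝ) : f s = 0 := by
  by_contra hs
  have hpos : 0 < ‖f s‖ := norm_pos_iff.2 hs
  have hsq : ∀ s : ℝ, Tendsto (fun N : ℕ => (N : ℝ)⁻¹ * ∑ k ∈ Finset.range N, ‖f (s + k)‖ ^ 2)
      atTop (nhds 0) := by
    intro s
    refine sq_mean (fun k => f (s + k)) C (fun k => hC _) (hm s) fun ε hε => ?_
    obtain ⟨m, lam, c, hP⟩ := hap ε hε
    refine ⟨m, lam, fun j => c j * Complex.exp (-(Complex.I * ((lam j * s : ℝ) : ℂ))), fun k => ?_⟩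
    convert hP (s + k) using 4
    rw [mul_assoc, ← Complex.exp_add]
    congr 2
    push_cast
    ring
  obtain ⟨F, hF⟩ := translates f hap (‖f s‖ / 2) (by positivity)
  have hlim : Tendsto (fun N : ℕ => ∑ τ ∈ F, (N : ℝ)⁻¹ * ∑ k ∈ Finset.range N,
      ‖f ((s - τ) + k)‖ ^ 2) atTop (nhds 0) := by
    rw [show (0 : ℝ) = ∑ τ ∈ F, 0 by simp]
    exact tendsto_finsetSum _ fun τ _ => hsq _
  have hge : ∀ᶠ N : ℕ in atTop, (‖f s‖ / 2) ^ 2 ≤ ∑ τ ∈ F, (N : ℝ)⁻¹ * ∑ k ∈ Finset.range N,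
      ‖f ((s - τ) + k)‖ ^ 2 := by
    filter_upwards [eventually_gt_atTop 0] with N hN
    have hN' : (0 : ℝ) < N := by exact_mod_cast hN
    rw [← Finset.mul_sum, Finset.sum_comm, le_inv_mul_iff₀ hN']
    have : ∑ k ∈ Finset.range N, (‖f s‖ / 2) ^ 2 ≤
        ∑ k ∈ Finset.range N, ∑ τ ∈ F, ‖f ((s - τ) + k)‖ ^ 2 := by
      refine Finset.sum_le_sum fun k _ => ?_
      obtain ⟨τ, hτ, h⟩ := hF k
      refine le_trans ?_ (Finset.single_le_sum (f := fun τ => ‖f ((s - τ) + k)‖ ^ 2)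
        (fun _ _ => by positivity) hτ)
      have h5 := h (s - τ)
      rw [sub_add_cancel, norm_sub_rev] at h5
      have h6 := norm_sub_norm_le (f s) (f (s - τ + k))
      gcongr
      linarith
    simpa using this
  have := ge_of_tendsto hlim hge
  have : 0 < (‖f s‖ / 2) ^ 2 := by positivity
  linarith

lemma finite_approx (ν : Measure ℝ) (g : ℝ → ℂ) (hg : Integrable g ν) (D : Set ℝ)
    (hD : D.Countable) (ε : ℝ) (hε : 0 < ε) :
    ∃ S : Finset ℝ, ↑S ⊆ D ∧ ∫ l in D \ ↑S, ‖g l‖ ∂ν < ε := by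
  classical
  rcases D.eq_empty_or_nonempty with rfl | hne
  · exact ⟨∅, by simp, by simpa using hε⟩
  obtain ⟨e, rfl⟩ := hD.exists_eq_range hne
  have h := tendsto_setIntegral_of_antitone (μ := ν) (f := fun l => ‖g l‖)
    (s := fun n : ℕ => Set.range e \ ↑((Finset.range n).image e))
    (fun n => (hD.mono Set.diff_subset).measurableSet)
    (fun a b hab => Set.diff_subset_diff_right (by
      exact_mod_cast Finset.image_subset_image (Finset.range_mono hab)))
    ⟨0, hg.norm.integrableOn⟩
  have h0 : (⋂ n : ℕ, Set.range e \ ↑((Finset.range n).image e)) = ∅ := by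
    ext x
    simp only [Set.mem_iInter, Set.mem_empty_iff_false, iff_false, not_forall]
    by_cases hx : x ∈ Set.range e
    · obtain ⟨i, rfl⟩ := hx
      refine ⟨i + 1, fun h => h.2 ?_⟩
      simp only [Finset.coe_image, Finset.coe_range]
      exact ⟨i, by simp, rfl⟩
    · exact ⟨0, fun h => hx h.1⟩
  rw [h0] at h
  simp only [Measure.restrict_empty, integral_zero_measure] at h
  obtain ⟨n, hn⟩ := (h.eventually (gt_mem_nhds hε)).exists
  refine ⟨(Finset.range n).image e, ?_, hn⟩
  intro x hx
  simp only [Finset.coe_image] at hx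
  obtain ⟨i, _, rfl⟩ := hx
  exact ⟨i, rfl⟩

/-- **A complex measure with almost periodic Fourier transform is pure point.**
Let `dμ = g dν` be a complex Borel measure of bounded variation on `ℝ` (with `ν` a finite
positive measure and `g ∈ L¹(ν)`), and suppose its Fourier transform
`μ̂(t) = ∫ e^{−itλ} g(λ) dν(λ)` is Bohr almost periodic (a uniform limit of finite
trigonometric sums). Then `μ` is pure point: there is a countable set `D ⊆ ℝ` with
`∫_{ℝ∖D} |g| dν = 0`. -/
theorem pure_point_of_almost_periodic_fourier
    (ν : Measure ℝ) [IsFiniteMeasure ν]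
    (g : ℝ → ℂ) (hg : Integrable g ν)
    (hap : ∀ ε : ℝ, 0 < ε →
      ∃ (m : ℕ) (lam : Fin m → ℝ) (c : Fin m → ℂ),
        ∀ t : ℝ,
          ‖(∫ l : ℝ, Complex.exp (-(Complex.I * ((t * l : ℝ) : ℂ))) * g l ∂ν)
            - ∑ j : Fin m, c j * Complex.exp (-(Complex.I * ((lam j * t : ℝ) : ℂ)))‖ ≤ ε) :
    ∃ D : Set ℝ, D.Countable ∧ (∫ l in Dᶜ, ‖g l‖ ∂ν) = 0 := by
  classical
  set D : Set ℝ := {x | ν {x} ≠ 0} with hDdef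
  have hD : D.Countable := by
    have := Measure.countable_meas_pos_of_disjoint_iUnion (μ := ν) (As := fun x : ℝ => ({x} : Set ℝ))
      (fun x => measurableSet_singleton x)
      (fun x y hxy => by simpa [Function.onFun] using hxy)
    refine this.mono fun x hx => ?_
    exact pos_iff_ne_zero.2 hx
  refine ⟨D, hD, ?_⟩
  have hDm := hD.measurableSet
  set ρ := ν.restrict Dᶜ with hρ
  have : NullSingletonClass ρ := ⟨fun x => by
    rw [hρ, Measure.restrict_apply (measurableSet_singleton x)]
    by_cases hx : x ∈ D
    · rw [show ({x} ∩ Dᶜ : Set ℝ) = ∅ by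
        ext y; simp only [Set.mem_inter_iff, Set.mem_singleton_iff, Set.mem_compl_iff,
          Set.mem_empty_iff_false, iff_false, not_and, not_not]
        rintro rfl; exact hx]
      exact measure_empty
    · refine measure_mono_null Set.inter_subset_left ?_
      simpa [hDdef] using hx⟩
  have hgρ : Integrable g ρ := hg.integrableOn
  have hz := ap_zero (fun t => ∫ l, Complex.exp (-(Complex.I * ((t * l : ℝ) : ℂ))) * g l ∂ρ)
    (∫ l, ‖g l‖ ∂ρ) (fun t => (norm_integral_le_integral_norm _).trans_eq (by
      simp only [norm_mul, norm_e, one_mul])) (fun s ξ => mean_zero hgρ s ξ) (fun ε hε => by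
      obtain ⟨m, lam, c, hP⟩ := hap (ε / 2) (by positivity)
      obtain ⟨S, hSD, hS⟩ := finite_approx ν g hg D hD (ε / 2) (by positivity)
      have hfin : ∃ (m' : ℕ) (lam' : Fin m' → ℝ) (c' : Fin m' → ℂ), ∀ t : ℝ,
          ∫ l in (S : Set ℝ), Complex.exp (-(Complex.I * ((t * l : ℝ) : ℂ))) * g l ∂ν
          = ∑ j, c' j * Complex.exp (-(Complex.I * ((lam' j * t : ℝ) : ℂ))) := by
        refine ⟨S.card, fun j => S.equivFin.symm j,
          fun j => ν.real {(S.equivFin.symm j : ℝ)} * g (S.equivFin.symm j), fun t => ?_⟩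
        rw [setIntegral_finset _ (int_e hg t).integrableOn, ← Finset.sum_coe_sort,
          ← Equiv.sum_comp S.equivFin.symm]
        refine Finset.sum_congr rfl fun j _ => ?_
        rw [Complex.real_smul, mul_comm t]
        ring
      obtain ⟨m', lam', c', hP'⟩ := hfin
      refine ⟨m + m', Fin.append lam lam', Fin.append c (fun j => - c' j), fun t => ?_⟩
      rw [Fin.sum_univ_add]
      simp only [Fin.append_left, Fin.append_right, neg_mul, Finset.sum_neg_distrib]
      rw [← hP' t]
      have hi := int_e hg t
      have e1 := integral_add_compl hDm hi
      have e2 := setIntegral_union (μ := ν)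
        (f := fun l => Complex.exp (-(Complex.I * ((t * l : ℝ) : ℂ))) * g l)
        (Set.disjoint_sdiff_right (s := (S : Set ℝ)) (t := D))
        (hDm.diff S.measurableSet) hi.integrableOn hi.integrableOn
      rw [Set.union_diff_cancel hSD] at e2
      have h1 := hP t
      rw [← e1, e2] at h1
      have h2 : ‖∫ l in D \ ↑S, Complex.exp (-(Complex.I * ((t * l : ℝ) : ℂ))) * g l ∂ν‖ ≤ ε / 2 := by
        refine (norm_integral_le_integral_norm _).trans ?_
        simp only [norm_mul, norm_e, one_mul]
        exact hS.le
      rw [← hρ] at h1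
      refine (le_of_eq ?_).trans ((norm_sub_le _ _).trans ((add_le_add h1 h2).trans_eq (add_halves ε)))
      congr 1
      ring)
  have h0 := uniq_complex hgρ hz
  rw [integral_eq_zero_of_ae]
  filter_upwards [h0] with l hl
  simp [hl]
end

section
/- Let ρ, M, M̃ be as in the model context and let T be the unique contraction on L²(ρ) with T∘M = M̃. Assume that for some ε > 0 one of the following holds: either ∫ s⁻² dρ(s) = 1 and ∫ s⁻⁴⁻ᵉ dρ(s) < ∞, or ∫ s⁻² dρ(s) < 1 and ∫ s⁻²⁻ᵉ dρ(s) < ∞. Then I − T (and hence also I − T*) is a trace class operator. -/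
open MeasureTheory Filter
open scoped InnerProductSpace ENNReal

/-- A bounded operator on a complex inner product space is *trace class (nuclear)* if it can
be written as `Kf = Σₙ ⟨f, aₙ⟩ bₙ` with `Σₙ ‖aₙ‖·‖bₙ‖ < ∞`. -/
def IsTraceClassOp {X : Type*} [NormedAddCommGroup X] [InnerProductSpace ℂ X]
    (K : X →L[ℂ] X) : Prop :=
  ∃ a b : ℕ → X, Summable (fun n : ℕ => ‖a n‖ * ‖b n‖) ∧
    ∀ f : X, HasSum (fun n : ℕ => ⟪a n, f⟫_ℂ • b n) (K f)


section HS
variable {H E : Type*} [NormedAddCommGroup H] [InnerProductSpace ℂ H] [CompleteSpace H]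
  [NormedAddCommGroup E] [InnerProductSpace ℂ E] [CompleteSpace E]

theorem enorm_sq_e {G : Type*} [NormedAddCommGroup G] (y : G) :
    ‖y‖ₑ ^ 2 = ENNReal.ofReal (‖y‖ ^ 2) := by
  rw [ENNReal.ofReal_pow (norm_nonneg _), ofReal_norm]

theorem enorm_inner_symm (x y : H) : ‖⟪x, y⟫_ℂ‖ₑ = ‖⟪y, x⟫_ℂ‖ₑ := by
  rw [← ofReal_norm, ← ofReal_norm, norm_inner_symm]

theorem parseval_e {ι : Type*} (h : HilbertBasis ι ℂ H) (x : H) :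
    ∑' j, ‖⟪h j, x⟫_ℂ‖ₑ ^ 2 = ‖x‖ₑ ^ 2 := by
  have h1 := (h.hasSum_inner_mul_inner x x)
  have h2 : HasSum (fun j => ‖⟪h j, x⟫_ℂ‖ ^ 2) (‖x‖ ^ 2) := by
    have h3 := Complex.hasSum_re h1
    convert h3 using 1
    · ext j
      rw [← inner_conj_symm x (h j), ← Complex.normSq_eq_conj_mul_self, Complex.normSq_eq_norm_sq]
      simp only [Complex.ofReal_re]
    · rw [inner_self_eq_norm_sq_to_K]; norm_cast
  simp_rw [enorm_sq_e]
  rw [← h2.tsum_eq]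
  rw [ENNReal.ofReal_tsum_of_nonneg (fun _ => by positivity) h2.summable]

theorem hs_adj {ι κ : Type*} (h : HilbertBasis ι ℂ H) (e : HilbertBasis κ ℂ E) (V : H →L[ℂ] E) :
    ∑' n, ‖ContinuousLinearMap.adjoint V (e n)‖ₑ ^ 2 = ∑' j, ‖V (h j)‖ₑ ^ 2 := by
  simp_rw [← parseval_e h, ← parseval_e e]
  rw [ENNReal.tsum_comm]
  refine tsum_congr fun j => tsum_congr fun n => ?_
  rw [ContinuousLinearMap.adjoint_inner_right, enorm_inner_symm]

theorem tc_of_countable {ι : Type*} [Countable ι] (K : H →L[ℂ] H) (a b : ι → H)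
    (hs : Summable (fun n => ‖a n‖ * ‖b n‖))
    (hK : ∀ f, HasSum (fun n => ⟪a n, f⟫_ℂ • b n) (K f)) : IsTraceClassOp K := by
  obtain ⟨g, hg⟩ := exists_injective_nat ι
  refine ⟨Function.extend g a 0, Function.extend g b 0, ?_, fun f => ?_⟩
  · rw [← hg.summable_iff]
    · convert hs using 1
      ext n
      simp [hg.extend_apply]
    · intro n hn
      rw [Function.extend_apply' _ _ _ (by simpa using hn)]
      simp
  · rw [← hg.hasSum_iff]
    · convert hK f using 1
      ext n
      simp [hg.extend_apply]
    · intro n hn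
      rw [Function.extend_apply' _ _ _ (by simpa using hn)]
      simp

theorem countable_hilbertBasis [SecondCountableTopology H] :
    ∃ (w : Set H) (_ : HilbertBasis w ℂ H), Countable w := by
  obtain ⟨w, b, hb⟩ := exists_hilbertBasis ℂ H
  refine ⟨w, b, ?_⟩
  have ho := b.orthonormal
  rw [hb] at ho
  have : Pairwise (fun i j : w => (1:ℝ) ≤ dist (i : H) (j : H)) := by
    intro i j hij
    rw [dist_eq_norm]
    have h1 : ‖(i : H) - j‖ ^ 2 = 2 := by
      rw [@norm_sub_sq ℂ, ho.1 i, ho.1 j, ho.2 hij]; norm_num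
    nlinarith [norm_nonneg ((i : H) - j)]
  have hd : DiscreteTopology w := by
    refine DiscreteTopology.of_forall_le_dist one_pos ?_
    intro i j hij
    exact this hij
  exact TopologicalSpace.separableSpace_iff_countable.mp inferInstance

theorem tc_of_hs [SecondCountableTopology E] {ι : Type*} (h : HilbertBasis ι ℂ H)
    (V W : H →L[ℂ] E) (hV : ∑' j, ‖V (h j)‖ₑ ^ 2 < ⊤) (hW : ∑' j, ‖W (h j)‖ₑ ^ 2 < ⊤) :
    IsTraceClassOp ((ContinuousLinearMap.adjoint W).comp V) := by
  obtain ⟨w, e, hw⟩ := countable_hilbertBasis (H := E)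
  rw [← hs_adj h e] at hV hW
  have key : ∀ U : H →L[ℂ] E, ∑' n, ‖ContinuousLinearMap.adjoint U (e n)‖ₑ ^ 2 < ⊤ →
      Summable (fun n => ‖ContinuousLinearMap.adjoint U (e n)‖ ^ 2) := by
    intro U hU
    have := ENNReal.summable_toReal hU.ne
    simpa using this
  refine tc_of_countable _ (fun n => ContinuousLinearMap.adjoint V (e n))
    (fun n => ContinuousLinearMap.adjoint W (e n)) ?_ ?_
  · refine Summable.of_nonneg_of_le (fun _ => by positivity) (fun n => ?_)
      ((key V hV).add (key W hW))
    nlinarith [sq_nonneg (‖ContinuousLinearMap.adjoint V (e n)‖ -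
      ‖ContinuousLinearMap.adjoint W (e n)‖), sq_nonneg (‖ContinuousLinearMap.adjoint V (e n)‖),
      sq_nonneg (‖ContinuousLinearMap.adjoint W (e n)‖)]
  · intro f
    have h1 := (ContinuousLinearMap.adjoint W).hasSum (e.hasSum_repr (V f))
    change HasSum _ (ContinuousLinearMap.adjoint W (V f))
    convert h1 using 1
    ext n
    simp [e.repr_apply_apply, ContinuousLinearMap.adjoint_inner_left]

theorem hs_op {ι : Type*} [Countable ι] (h : HilbertBasis ι ℂ H) (μ : Measure ℝ) (v : ℝ → H)
    (hm : ∀ x, AEStronglyMeasurable (fun t => ⟪v t, x⟫_ℂ) μ)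
    (hfin : ∫⁻ t, ‖v t‖ₑ ^ 2 ∂μ < ⊤) :
    ∃ V : H →L[ℂ] Lp ℂ 2 μ, (∀ x, V x =ᵐ[μ] fun t => ⟪v t, x⟫_ℂ) ∧
      ∑' j, ‖V (h j)‖ₑ ^ 2 < ⊤ := by
  have hle : ∀ x, ∫⁻ t, ‖⟪v t, x⟫_ℂ‖ₑ ^ 2 ∂μ ≤ (∫⁻ t, ‖v t‖ₑ ^ 2 ∂μ) * ‖x‖ₑ ^ 2 := by
    intro x
    rw [← lintegral_mul_const' _ _ (by simp)]
    refine lintegral_mono fun t => ?_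
    rw [← mul_pow]
    gcongr
    rw [← ofReal_norm, ← ofReal_norm, ← ofReal_norm, ← ENNReal.ofReal_mul (norm_nonneg _)]
    exact ENNReal.ofReal_le_ofReal (norm_inner_le_norm _ _)
  have hL : ∀ x, MemLp (fun t => ⟪v t, x⟫_ℂ) 2 μ := by
    intro x
    refine ⟨hm x, ?_⟩
    rw [eLpNorm_lt_top_iff_lintegral_rpow_enorm_lt_top (by simp) (by simp)]
    simp only [ENNReal.toReal_ofNat, ENNReal.rpow_ofNat]
    exact (hle x).trans_lt (ENNReal.mul_lt_top hfin (by simp))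
  have hnorm : ∀ x, ‖(hL x).toLp‖ₑ ^ 2 = ∫⁻ t, ‖⟪v t, x⟫_ℂ‖ₑ ^ 2 ∂μ := by
    intro x
    rw [Lp.enorm_def, eLpNorm_congr_ae (hL x).coeFn_toLp,
      eLpNorm_eq_lintegral_rpow_enorm_toReal (by simp) (by simp)]
    simp only [ENNReal.toReal_ofNat, ENNReal.rpow_ofNat]
    rw [← ENNReal.rpow_ofNat, ← ENNReal.rpow_mul]
    simp
  let V0 : H →ₗ[ℂ] Lp ℂ 2 μ :=
    { toFun := fun x => (hL x).toLp
      map_add' := by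
        intro x y
        rw [← MemLp.toLp_add]
        apply MemLp.toLp_congr
        filter_upwards with t
        simp [inner_add_right]
      map_smul' := by
        intro c x
        rw [RingHom.id_apply, ← MemLp.toLp_const_smul]
        apply MemLp.toLp_congr
        filter_upwards with t
        simp [inner_smul_right] }
  let V : H →L[ℂ] Lp ℂ 2 μ := V0.mkContinuous (Real.sqrt (∫⁻ t, ‖v t‖ₑ ^ 2 ∂μ).toReal) (by
    intro x
    change ‖(hL x).toLp‖ ≤ _
    have h1 := hle x
    rw [← hnorm x] at h1
    have h2 := ENNReal.toReal_mono (ENNReal.mul_lt_top hfin (by simp)).ne h1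
    simp only [ENNReal.toReal_pow, toReal_enorm, ENNReal.toReal_mul] at h2
    refine abs_le_of_sq_le_sq' ?_ (by positivity) |>.2
    rw [mul_pow, Real.sq_sqrt ENNReal.toReal_nonneg]
    exact h2)
  refine ⟨V, fun x => (hL x).coeFn_toLp, ?_⟩
  have : ∀ j, ‖V (h j)‖ₑ ^ 2 = ∫⁻ t, ‖⟪v t, h j⟫_ℂ‖ₑ ^ 2 ∂μ := fun j => hnorm _
  simp_rw [this]
  rw [← lintegral_tsum (fun j => ((hm (h j)).enorm.pow_const 2))]
  convert hfin using 3 with t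
  rw [← parseval_e h]
  refine tsum_congr fun j => ?_
  rw [enorm_inner_symm]

end HS

section Sqrt
open Set Real
variable {H : Type*} [NormedAddCommGroup H] [InnerProductSpace ℂ H] [CompleteSpace H]

theorem sqrt_repr (S : H →L[ℂ] H) (hS : 0 ≤ S) :
    ∃ Q : ℝ → H →L[ℂ] H, IntegrableOn Q (Ioi 0) ∧
      (∫ t in Ioi (0:ℝ), rpowIntegrand₀₁ (1/2) t 1) • S = ∫ t in Ioi 0, Q t ∧
      ∀ t > 0, (t • 1 + S * S) * (t ^ (-(1/2) : ℝ) • 1 - Q t) = t ^ ((1/2) : ℝ) • 1 := by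
  have hp : (1/2 : ℝ) ∈ Ioo (0:ℝ) 1 := by constructor <;> norm_num
  have hsa : IsSelfAdjoint S := hS.isSelfAdjoint
  have hspec : ∀ x ∈ spectrum ℝ S, 0 ≤ x := fun x hx => spectrum_nonneg_of_nonneg hS hx
  have hcont : ContinuousOn (Function.uncurry fun t x : ℝ => rpowIntegrand₀₁ (1/2) t (x ^ 2))
      (Ioi 0 ×ˢ spectrum ℝ S) := by
    have h1 := continuousOn_rpowIntegrand₀₁_uncurry hp (Ici 0) subset_rfl
    have h2 : ContinuousOn (fun q : ℝ × ℝ => (q.1, q.2 ^ 2)) (Ioi 0 ×ˢ spectrum ℝ S) := by fun_prop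
    refine h1.comp h2 ?_
    rintro ⟨t, x⟩ ⟨ht, hx⟩
    exact ⟨ht, sq_nonneg x⟩
  have hbound : ∀ᵐ t ∂(volume.restrict (Ioi (0:ℝ))), ∀ z ∈ spectrum ℝ S,
      ‖rpowIntegrand₀₁ (1/2) t (z ^ 2)‖ ≤ rpowIntegrand₀₁ (1/2) t (‖S‖ ^ 2 * ‖(1 : H →L[ℂ] H)‖ ^ 2) := by
    filter_upwards [ae_restrict_mem measurableSet_Ioi] with t ht z hz
    rw [Real.norm_of_nonneg (rpowIntegrand₀₁_nonneg hp.1 (le_of_lt ht) (sq_nonneg z))]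
    refine rpowIntegrand₀₁_monotoneOn hp (le_of_lt ht) (sq_nonneg z)
      (mem_Ici.2 (by positivity)) ?_
    have := spectrum.norm_le_norm_mul_of_mem hz
    rw [← mul_pow, ← sq_abs]
    gcongr
    exact this
  have hfin : HasFiniteIntegral (fun t => rpowIntegrand₀₁ (1/2) t (‖S‖ ^ 2 * ‖(1 : H →L[ℂ] H)‖ ^ 2))
      (volume.restrict (Ioi (0:ℝ))) :=
    (integrableOn_rpowIntegrand₀₁_Ioi hp (by positivity)).2
  refine ⟨fun t => cfc (fun x => rpowIntegrand₀₁ (1/2) t (x ^ 2)) S, ?_, ?_, ?_⟩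
  · exact integrableOn_cfc measurableSet_Ioi _ _ S hcont hbound hfin hsa
  · rw [← cfc_setIntegral measurableSet_Ioi _ _ S hcont hbound hfin hsa]
    have : ∀ x ∈ spectrum ℝ S, ∫ t in Ioi (0:ℝ), rpowIntegrand₀₁ (1/2) t (x ^ 2) =
        (∫ t in Ioi (0:ℝ), rpowIntegrand₀₁ (1/2) t 1) * x := by
      intro x hx
      rw [integral_rpowIntegrand₀₁_eq_rpow_mul_const hp (sq_nonneg x), ← Real.sqrt_eq_rpow,
        Real.sqrt_sq (hspec x hx), mul_comm]
    rw [cfc_congr this, cfc_const_mul_id _ _ hsa]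
  · intro t ht
    have hc : ContinuousOn (fun x : ℝ => rpowIntegrand₀₁ (1/2) t (x ^ 2)) (spectrum ℝ S) :=
      hcont.comp (f := fun x : ℝ => (t, x)) (by fun_prop) (fun x hx => ⟨ht, hx⟩)
    have e1 : (t ^ (-(1/2) : ℝ) • 1 - cfc (fun x => rpowIntegrand₀₁ (1/2) t (x ^ 2)) S) =
        cfc (fun x => t ^ (-(1/2) : ℝ) - rpowIntegrand₀₁ (1/2) t (x ^ 2)) S := by
      rw [cfc_sub _ _ S (by fun_prop) hc, cfc_const _ _ hsa, Algebra.algebraMap_eq_smul_one]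
    have e2 : t • (1 : H →L[ℂ] H) + S * S = cfc (fun x : ℝ => t + x ^ 2) S := by
      rw [cfc_add S (fun _ => t) (fun x => x ^ 2) (by fun_prop) (by fun_prop), cfc_const _ _ hsa, Algebra.algebraMap_eq_smul_one,
        cfc_pow_id S 2 hsa, pow_two]
    rw [e1, e2, ← cfc_mul _ _ S (by fun_prop) (by fun_prop)]
    rw [← Algebra.algebraMap_eq_smul_one, ← cfc_const _ S hsa]
    refine cfc_congr fun x hx => ?_
    have : t + x ^ 2 ≠ 0 := by positivity
    simp only [rpowIntegrand₀₁]
    have h3 : t ^ (-(1/2) : ℝ) = t ^ (1/2 : ℝ) * t⁻¹ := by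
      rw [← Real.rpow_neg_one, ← Real.rpow_add ht]; norm_num
    rw [h3]; field_simp; ring

end Sqrt

section Core
open Set Real
variable {H : Type*} [NormedAddCommGroup H] [InnerProductSpace ℂ H] [CompleteSpace H]

theorem tc_smul (c : ℂ) (K : H →L[ℂ] H) (hK : IsTraceClassOp K) : IsTraceClassOp (c • K) := by
  obtain ⟨a, b, hs, h⟩ := hK
  refine ⟨a, fun n => c • b n, ?_, fun f => ?_⟩
  · simp_rw [norm_smul]
    refine (hs.mul_left ‖c‖).congr fun n => ?_
    ring
  · have := (h f).const_smul c
    simp_rw [smul_comm _ c]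
    exact this

theorem rank_one_diff (one : H) (M S QM QS : H →L[ℂ] H) (hM : 0 ≤ M) (hS : 0 ≤ S)
    (hsq : ∀ f, S (S f) = M (M f) - ⟪one, f⟫_ℂ • one) (t : ℝ) (ht : 0 < t) (g : H) (D : ℝ)
    (hg : (t : ℂ) • g + M (M g) = one) (hD : (D : ℂ) = 1 - ⟪one, g⟫_ℂ) (hDp : 0 < D)
    (hQM : (t • 1 + M * M) * (t ^ (-(1/2) : ℝ) • 1 - QM) = t ^ ((1/2) : ℝ) • 1)
    (hQS : (t • 1 + S * S) * (t ^ (-(1/2) : ℝ) • 1 - QS) = t ^ ((1/2) : ℝ) • 1) (f : H) :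
    (QM - QS) f = (((t ^ ((1/2) : ℝ) * D⁻¹ : ℝ) : ℂ) * ⟪g, f⟫_ℂ) • g := by
  have sM : ∀ x y, ⟪M x, y⟫_ℂ = ⟪x, M y⟫_ℂ :=
    (ContinuousLinearMap.nonneg_iff_isPositive M).1 hM |>.1
  have sS : ∀ x y, ⟪S x, y⟫_ℂ = ⟪x, S y⟫_ℂ :=
    (ContinuousLinearMap.nonneg_iff_isPositive S).1 hS |>.1
  have hinj : ∀ x, (t : ℂ) • x + S (S x) = 0 → x = 0 := by
    intro x hx
    have h1 : ⟪x, (t : ℂ) • x + S (S x)⟫_ℂ = 0 := by rw [hx, inner_zero_right]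
    rw [inner_add_right, inner_smul_right, ← sS, inner_self_eq_norm_sq_to_K,
      inner_self_eq_norm_sq_to_K] at h1
    have h2 : t * ‖x‖ ^ 2 + ‖S x‖ ^ 2 = 0 := by
      apply Complex.ofReal_injective
      push_cast
      exact h1
    have h3 : t * ‖x‖ ^ 2 = 0 := by nlinarith [sq_nonneg ‖S x‖, mul_nonneg ht.le (sq_nonneg ‖x‖)]
    simpa [ht.ne'] using h3
  have eM := congrArg (fun L : H →L[ℂ] H => L f) hQM
  have eS := congrArg (fun L : H →L[ℂ] H => L f) hQS
  simp only [mul_apply_eq_comp, add_apply,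
    smul_apply, one_apply_eq_self,
    sub_apply] at eM eS
  set r := t ^ ((1/2) : ℝ)
  set zM := t ^ (-(1/2) : ℝ) • f - QM f with hzM
  set zS := t ^ (-(1/2) : ℝ) • f - QS f with hzS
  have hdiff : (QM - QS) f = zS - zM := by
    simp [hzM, hzS]
  have hin : ⟪one, zM⟫_ℂ = (r : ℂ) * ⟪g, f⟫_ℂ := by
    rw [← hg, inner_add_left, sM, sM, inner_smul_left, Complex.conj_ofReal, ← inner_smul_right,
      ← inner_add_right]
    have : (t : ℂ) • zM + M (M zM) = (r : ℂ) • f := by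
      rw [Complex.coe_smul, Complex.coe_smul]; exact eM
    rw [this, inner_smul_right]
  rw [hdiff]
  refine sub_eq_zero.1 (hinj _ ?_)
  have e1 : (t : ℂ) • g + S (S g) = (D : ℂ) • one := by
    rw [hsq, ← add_sub_assoc, hg, hD, sub_smul, one_smul]
  have e2 : (t : ℂ) • zM + S (S zM) = (r : ℂ) • f - ((r : ℂ) * ⟪g, f⟫_ℂ) • one := by
    rw [hsq, hin, ← add_sub_assoc, Complex.coe_smul, Complex.coe_smul, eM]
  have e3 : (t : ℂ) • zS + S (S zS) = (r : ℂ) • f := by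
    rw [Complex.coe_smul, Complex.coe_smul, eS]
  have hDc : (D : ℂ) ≠ 0 := by exact_mod_cast hDp.ne'
  set c := (((r * D⁻¹ : ℝ) : ℂ) * ⟪g, f⟫_ℂ) with hc
  calc (t : ℂ) • (zS - zM - c • g) + S (S (zS - zM - c • g))
      = ((t : ℂ) • zS + S (S zS)) - ((t : ℂ) • zM + S (S zM)) - c • ((t : ℂ) • g + S (S g)) := by
        simp only [map_sub, map_smul, smul_sub, smul_add, smul_smul]
        rw [mul_comm c]
        abel
    _ = 0 := by
        rw [e1, e2, e3, smul_smul, sub_sub_cancel, ← sub_smul]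
        have : (r : ℂ) * ⟪g, f⟫_ℂ - c * D = 0 := by
          rw [hc]; push_cast; field_simp; ring
        rw [this, zero_smul]

theorem lint_phi (r K : ℝ) (hr : -(1/2) < r) (v : ℝ → H)
    (h1 : ∀ t, 0 < t → t ≤ 1 → ‖v t‖ ≤ K * t ^ r)
    (h2 : ∀ t, 1 < t → ‖v t‖ ≤ K * t ^ (-(3/4) : ℝ)) :
    ∫⁻ t in Ioi (0:ℝ), ‖v t‖ₑ ^ 2 < ⊤ := by
  have key : ∀ (s : ℝ) (t : ℝ), 0 < t → ‖v t‖ ≤ K * t ^ s →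
      ‖v t‖ₑ ^ 2 ≤ ENNReal.ofReal (K ^ 2 * t ^ (2 * s)) := by
    intro s t ht h
    rw [enorm_sq_e]
    apply ENNReal.ofReal_le_ofReal
    calc ‖v t‖ ^ 2 ≤ (K * t ^ s) ^ 2 := by gcongr
      _ = _ := by rw [mul_pow, ← Real.rpow_natCast (t ^ s), ← Real.rpow_mul ht.le]; ring_nf
  rw [← Ioc_union_Ioi_eq_Ioi (zero_le_one (α := ℝ))]
  refine (lintegral_union_le _ _ _).trans_lt (ENNReal.add_lt_top.2 ⟨?_, ?_⟩)
  · have hi : IntegrableOn (fun t : ℝ => K ^ 2 * t ^ (2 * r)) (Ioc 0 1) := by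
      refine Integrable.const_mul ?_ _
      rw [← IntegrableOn, integrableOn_Ioc_iff_integrableOn_Ioo,
        intervalIntegral.integrableOn_Ioo_rpow_iff one_pos]
      linarith
    refine lt_of_le_of_lt (setLIntegral_mono' measurableSet_Ioc
      fun t ht => key r t ht.1 (h1 t ht.1 ht.2)) ?_
    exact hi.lintegral_lt_top
  · have hi : IntegrableOn (fun t : ℝ => K ^ 2 * t ^ (2 * (-(3/4) : ℝ))) (Ioi 1) := by
      refine Integrable.const_mul ?_ _
      exact integrableOn_Ioi_rpow_of_lt (by norm_num) one_pos
    refine lt_of_le_of_lt (setLIntegral_mono' measurableSet_Ioi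
      fun t ht => key _ t (one_pos.trans ht) (h2 t ht)) ?_
    exact hi.lintegral_lt_top

theorem core [SecondCountableTopology H] (one : H) (M S T : H →L[ℂ] H) (hM : 0 ≤ M) (hS : 0 ≤ S)
    (hinj : ∀ x, M x = 0 → x = 0)
    (hsq : ∀ f, S (S f) = M (M f) - ⟪one, f⟫_ℂ • one) (hT : T.comp M = S)
    (g h : ℝ → H) (D : ℝ → ℝ) (hgh : ∀ t > 0, M (h t) = g t)
    (hg : ∀ t : ℝ, t > 0 → (t : ℂ) • g t + M (M (g t)) = one)
    (hD : ∀ t > 0, (D t : ℂ) = 1 - ⟪one, g t⟫_ℂ) (hDp : ∀ t > 0, 0 < D t)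
    (mg : ∀ x, AEStronglyMeasurable (fun t => ⟪g t, x⟫_ℂ) (volume.restrict (Ioi 0)))
    (mh : ∀ x, AEStronglyMeasurable (fun t => ⟪h t, x⟫_ℂ) (volume.restrict (Ioi 0)))
    (mD : AEMeasurable D (volume.restrict (Ioi 0)))
    (K p1 p2 q : ℝ) (hK : 0 ≤ K) (hpq : -1 < 1/2 + p1 + p2 - q)
    (bh : ∀ t, 0 < t → t ≤ 1 → ‖h t‖ ≤ K * t ^ p1)
    (bg : ∀ t, 0 < t → t ≤ 1 → ‖g t‖ ≤ K * t ^ p2)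
    (bD : ∀ t, 0 < t → t ≤ 1 → (D t)⁻¹ ≤ K * t ^ (-q))
    (bh' : ∀ t, 1 < t → ‖h t‖ ≤ K * t ^ (-1 : ℝ))
    (bg' : ∀ t, 1 < t → ‖g t‖ ≤ K * t ^ (-1 : ℝ))
    (bD' : ∀ t, 1 < t → (D t)⁻¹ ≤ K) :
    IsTraceClassOp (1 - T) ∧ IsTraceClassOp (1 - ContinuousLinearMap.adjoint T) := by
  have sM : ∀ x y, ⟪M x, y⟫_ℂ = ⟪x, M y⟫_ℂ :=
    (ContinuousLinearMap.nonneg_iff_isPositive M).1 hM |>.1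
  obtain ⟨QM, iM, rM, eM⟩ := sqrt_repr M hM
  obtain ⟨QS, iS, rS, eS⟩ := sqrt_repr S hS
  have hC := integral_rpowIntegrand₀₁_one_pos (p := 1/2) (by constructor <;> norm_num)
  set C := ∫ t in Ioi (0:ℝ), rpowIntegrand₀₁ (1/2) t 1
  set a : ℝ := (1/2 - q + p2 - p1) / 2 with ha
  let al : ℝ → ℝ := fun t => if t ≤ 1 then t ^ a else t ^ (1/4 : ℝ)
  let be : ℝ → ℝ := fun t => if t ≤ 1 then t ^ (1/2 - a) * (D t)⁻¹ else t ^ (1/4 : ℝ) * (D t)⁻¹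
  have mal : AEMeasurable al (volume.restrict (Ioi 0)) := by
    refine Measurable.aemeasurable ?_
    exact Measurable.ite measurableSet_Iic (by fun_prop) (by fun_prop)
  have mbe : AEMeasurable be (volume.restrict (Ioi 0)) := by
    have : be = fun t => (if t ≤ 1 then t ^ (1/2 - a) else t ^ (1/4 : ℝ)) * (D t)⁻¹ := by
      ext t; simp only [be]; split_ifs <;> rfl
    rw [this]
    refine AEMeasurable.mul (Measurable.aemeasurable ?_) mD.inv
    exact Measurable.ite measurableSet_Iic (by fun_prop) (by fun_prop)
  have halbe : ∀ t > 0, be t * al t = t ^ (1/2 : ℝ) * (D t)⁻¹ := by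
    intro t ht
    simp only [al, be]
    split_ifs
    · rw [mul_right_comm, ← Real.rpow_add ht]; ring_nf
    · rw [mul_right_comm, ← Real.rpow_add ht]; ring_nf
  obtain ⟨w, e, hw⟩ := countable_hilbertBasis (H := H)
  set r := a + p1 with hr
  have hr' : -(1/2) < r := by rw [hr, ha]; linarith
  obtain ⟨V, hV, hVs⟩ := hs_op e (volume.restrict (Ioi 0)) (fun t => (al t : ℂ) • h t) (by
      intro x
      simp_rw [inner_smul_left, Complex.conj_ofReal]
      exact (Complex.measurable_ofReal.comp_aemeasurable mal).aestronglyMeasurable.mul (mh x)) (by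
      refine lint_phi r K hr' _ ?_ ?_
      · intro t ht ht1
        simp only [al, if_pos ht1]
        rw [norm_smul, Complex.norm_real, Real.norm_of_nonneg (by positivity), hr,
          Real.rpow_add ht]
        have := bh t ht ht1
        calc _ ≤ t ^ a * (K * t ^ p1) := by gcongr
          _ = _ := by ring
      · intro t ht
        have ht0 : 0 < t := by linarith
        simp only [al, if_neg (not_le.2 ht)]
        rw [norm_smul, Complex.norm_real, Real.norm_of_nonneg (by positivity)]
        have := bh' t ht
        calc _ ≤ t ^ (1/4 : ℝ) * (K * t ^ (-1 : ℝ)) := by gcongr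
          _ = K * t ^ (1/4 + (-1) : ℝ) := by rw [Real.rpow_add ht0]; ring
          _ = _ := by norm_num)
  obtain ⟨W, hW, hWs⟩ := hs_op e (volume.restrict (Ioi 0)) (fun t => (be t : ℂ) • g t) (by
      intro x
      simp_rw [inner_smul_left, Complex.conj_ofReal]
      exact (Complex.measurable_ofReal.comp_aemeasurable mbe).aestronglyMeasurable.mul (mg x)) (by
      refine lint_phi r (K * K) hr' _ ?_ ?_
      · intro t ht ht1
        simp only [be, if_pos ht1]
        have := hDp t ht
        rw [norm_smul, Complex.norm_real, Real.norm_of_nonneg (by positivity)]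
        have h1 := bg t ht ht1
        have h2 := bD t ht ht1
        calc _ ≤ t ^ (1/2 - a) * (K * t ^ (-q)) * (K * t ^ p2) := by gcongr
          _ = K * K * t ^ ((1/2 - a) + (-q) + p2) := by rw [Real.rpow_add ht, Real.rpow_add ht]; ring
          _ = _ := by rw [hr, ha]; ring_nf
      · intro t ht
        have ht0 : 0 < t := by linarith
        simp only [be, if_neg (not_le.2 ht)]
        have := hDp t ht0
        rw [norm_smul, Complex.norm_real, Real.norm_of_nonneg (by positivity)]
        have h1 := bg' t ht
        have h2 := bD' t ht
        calc _ ≤ t ^ (1/4 : ℝ) * K * (K * t ^ (-1 : ℝ)) := by gcongr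
          _ = K * K * t ^ (1/4 + (-1) : ℝ) := by rw [Real.rpow_add ht0]; ring
          _ = _ := by norm_num)
  have hdense : DenseRange M := by
    have h1 : M.rangeᗮ = ⊥ := by
      rw [ContinuousLinearMap.orthogonal_range]
      rw [LinearMap.IsSymmetric.clm_adjoint_eq
        ((ContinuousLinearMap.nonneg_iff_isPositive M).1 hM |>.1)]
      rw [LinearMap.ker_eq_bot']
      exact hinj
    have h2 := Submodule.topologicalClosure_eq_top_iff.2 h1
    have h3 := Submodule.dense_iff_topologicalClosure_eq_top.2 h2
    exact h3
  have hmain : (C : ℂ) • (1 - T) = (ContinuousLinearMap.adjoint W).comp V := by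
    refine ContinuousLinearMap.ext fun x => ?_
    refine congrFun (hdense.equalizer (g := ((C : ℂ) • (1 - T) : H →L[ℂ] H))
      (h := (ContinuousLinearMap.adjoint W).comp V)
      (ContinuousLinearMap.continuous _) (ContinuousLinearMap.continuous _) ?_) x
    ext1 f
    refine ext_inner_left ℂ fun y => ?_
    have hTf : T (M f) = S f := congrArg (fun L : H →L[ℂ] H => L f) hT
    have e1 : ((C : ℂ) • (1 - T)) (M f) = ∫ t in Ioi 0, (QM t - QS t) f := by
      have hint : Integrable (fun t => QM t - QS t) (volume.restrict (Ioi 0)) := iM.sub iS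
      rw [← ContinuousLinearMap.integral_apply hint, integral_sub iM iS, ← rM, ← rS]
      simp [hTf, smul_sub]
    have hi : IntegrableOn (fun t => (QM t - QS t) f) (Ioi 0) :=
      ((iM.sub iS).apply_continuousLinearMap f)
    change ⟪y, ((C : ℂ) • (1 - T)) (M f)⟫_ℂ = ⟪y, ContinuousLinearMap.adjoint W (V (M f))⟫_ℂ
    rw [e1, ContinuousLinearMap.adjoint_inner_right, L2.inner_def, ← integral_inner hi]
    refine integral_congr_ae ?_
    filter_upwards [hV (M f), hW y, ae_restrict_mem measurableSet_Ioi] with t h1 h2 ht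
    rw [h1, h2, rank_one_diff one M S (QM t) (QS t) hM hS hsq t ht (g t) (D t) (hg t ht) (hD t ht)
      (hDp t ht) (eM t ht) (eS t ht), ← halbe t ht, ← hgh t ht]
    simp only [inner_smul_left, inner_smul_right, RCLike.inner_apply, Complex.conj_ofReal, map_mul,
      inner_conj_symm, sM]
    push_cast
    ring
  have : Fact ((2 : ℝ≥0∞) ≠ ⊤) := ⟨by simp⟩
  have hCc : (C : ℂ) ≠ 0 := by exact_mod_cast hC.ne'
  have f1 : 1 - T = (C : ℂ)⁻¹ • (ContinuousLinearMap.adjoint W).comp V := by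
    rw [← hmain, smul_smul, inv_mul_cancel₀ hCc, one_smul]
  constructor
  · rw [f1]
    exact tc_smul _ _ (tc_of_hs e V W hVs hWs)
  · have f2 : 1 - ContinuousLinearMap.adjoint T =
        (C : ℂ)⁻¹ • (ContinuousLinearMap.adjoint V).comp W := by
      have := congrArg ContinuousLinearMap.adjoint f1
      rw [map_sub, ContinuousLinearMap.adjoint_one] at this
      rw [this, map_smulₛₗ, ContinuousLinearMap.adjoint_comp,
        ContinuousLinearMap.adjoint_adjoint]
      simp
    rw [f2]
    exact tc_smul _ _ (tc_of_hs e W V hWs hVs)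

end Core

section Kern
open Set Real

theorem interp (s t a b : ℝ) (hs : 0 < s) (ht : 0 < t) (ha : 0 ≤ a) (hb : 0 ≤ b) (hab : a + b = 2) :
    ((s ^ 2 + t)⁻¹) ^ 2 ≤ t ^ (-b) * s ^ (-(2 * a)) := by
  have h0 : 0 < s ^ 2 + t := by positivity
  have e : ((s ^ 2 + t)⁻¹) ^ 2 = (s ^ 2 + t) ^ (-b) * (s ^ 2 + t) ^ (-a) := by
    rw [← Real.rpow_add h0, inv_pow, ← Real.rpow_natCast, ← Real.rpow_neg h0.le]
    congr 1
    push_cast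
    linarith
  have e2 : s ^ (-(2 * a)) = (s ^ 2) ^ (-a) := by
    rw [← Real.rpow_natCast, ← Real.rpow_mul hs.le]
    congr 1
    push_cast; ring
  rw [e, e2]
  have h1 : (s ^ 2 + t) ^ (-b) ≤ t ^ (-b) :=
    Real.rpow_le_rpow_of_nonpos ht (by nlinarith) (by linarith)
  have h2 : (s ^ 2 + t) ^ (-a) ≤ (s ^ 2) ^ (-a) :=
    Real.rpow_le_rpow_of_nonpos (by positivity) (by linarith) (by linarith)
  gcongr

theorem kernelLp (ρ : Measure ℝ) [IsFiniteMeasure ρ] (hpos : ∀ᵐ s ∂ρ, 0 < s) (c : ℝ)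
    (hI : Integrable (fun s : ℝ => s ^ (-(2 * c))) ρ) :
    ∃ v : ℝ → Lp ℂ 2 ρ,
      (∀ t > 0, ∀ᵐ s ∂ρ, (v t : ℝ → ℂ) s = ((s ^ (-c) * (s ^ 2 + t)⁻¹ : ℝ) : ℂ)) ∧
      (∀ x, AEStronglyMeasurable (fun t => ⟪v t, x⟫_ℂ) (volume.restrict (Ioi 0))) ∧
      (∀ a b : ℝ, 0 ≤ a → 0 ≤ b → a + b = 2 → Integrable (fun s : ℝ => s ^ (-(2 * a + 2 * c))) ρ →
        ∀ t > 0, ‖v t‖ ≤ √(∫ s, s ^ (-(2 * a + 2 * c)) ∂ρ) * t ^ (-(b / 2))) := by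
  have hc0 : MemLp (fun s : ℝ => s ^ (-c)) 2 ρ := by
    rw [memLp_two_iff_integrable_sq (by fun_prop)]
    refine hI.congr ?_
    filter_upwards [hpos] with s hs
    rw [← Real.rpow_natCast, ← Real.rpow_mul hs.le]
    congr 1
    push_cast; ring
  have hex : ∀ t : ℝ, ∃ f : Lp ℂ 2 ρ, 0 < t →
      ∀ᵐ s ∂ρ, (f : ℝ → ℂ) s = ((s ^ (-c) * (s ^ 2 + t)⁻¹ : ℝ) : ℂ) := by
    intro t
    by_cases ht : 0 < t
    · have h1 : MemLp (fun s : ℝ => s ^ (-c) * (s ^ 2 + t)⁻¹) 2 ρ := by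
        refine hc0.of_le_mul (c := t⁻¹) (by fun_prop) ?_
        filter_upwards with s
        rw [norm_mul, mul_comm]
        gcongr
        rw [Real.norm_of_nonneg (by positivity)]
        gcongr
        nlinarith [sq_nonneg s]
      refine ⟨(h1.ofReal (K := ℂ)).toLp, fun _ => ?_⟩
      filter_upwards [(h1.ofReal (K := ℂ)).coeFn_toLp] with s hs
      rw [hs]; rfl
    · exact ⟨0, fun h => absurd h ht⟩
  choose v hv using hex
  refine ⟨v, fun t ht => hv t ht, fun x => ?_, ?_⟩
  · have hF : StronglyMeasurable (Function.uncurry fun t s : ℝ =>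
        ⟪((s ^ (-c) * (s ^ 2 + t)⁻¹ : ℝ) : ℂ), (x : ℝ → ℂ) s⟫_ℂ) := by
      have hx := (Lp.stronglyMeasurable x).measurable
      refine Measurable.stronglyMeasurable ?_
      simp only [Function.uncurry_def]
      refine Measurable.inner ?_ ?_
      · exact Complex.measurable_ofReal.comp (by fun_prop)
      · exact hx.comp measurable_snd
    have hG := hF.integral_prod_right (ν := ρ)
    refine ⟨_, hG, ?_⟩
    filter_upwards [ae_restrict_mem measurableSet_Ioi] with t ht
    rw [L2.inner_def]
    refine integral_congr_ae ?_
    filter_upwards [hv t ht] with s hs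
    rw [hs]
  · intro a b ha hb hab hint t ht
    have h1 : ‖v t‖ ^ 2 = ∫ s, ‖(v t : ℝ → ℂ) s‖ ^ 2 ∂ρ := by
      have := L2.inner_def (𝕜 := ℂ) (v t) (v t)
      rw [inner_self_eq_norm_sq_to_K] at this
      apply Complex.ofReal_injective
      rw [← integral_complex_ofReal]
      push_cast
      refine Eq.trans this (integral_congr_ae ?_)
      filter_upwards with s
      rw [inner_self_eq_norm_sq_to_K]; rfl
    have h2 : ‖v t‖ ^ 2 ≤ t ^ (-b) * ∫ s, s ^ (-(2 * a + 2 * c)) ∂ρ := by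
      rw [h1, ← integral_const_mul]
      refine integral_mono_of_nonneg (by filter_upwards with s; positivity)
        (hint.const_mul _) ?_
      filter_upwards [hv t ht, hpos] with s hs hs0
      rw [hs, Complex.norm_real, Real.norm_eq_abs, sq_abs, mul_pow]
      have h3 := interp s t a b hs0 ht ha hb hab
      have h4 : (s ^ (-c)) ^ 2 = s ^ (-(2 * c)) := by
        rw [← Real.rpow_natCast, ← Real.rpow_mul hs0.le]
        congr 1
        push_cast; ring
      have h5 : s ^ (-(2 * a + 2 * c)) = s ^ (-(2 * c)) * s ^ (-(2 * a)) := by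
        rw [← Real.rpow_add hs0]; ring_nf
      rw [h4, h5]
      calc _ ≤ s ^ (-(2 * c)) * (t ^ (-b) * s ^ (-(2 * a))) := by gcongr
        _ = _ := by ring
    have hJ : 0 ≤ ∫ s, s ^ (-(2 * a + 2 * c)) ∂ρ := by
      refine integral_nonneg_of_ae ?_
      filter_upwards [hpos] with s hs
      exact Real.rpow_nonneg hs.le _
    refine abs_le_of_sq_le_sq' ?_ (by positivity) |>.2
    rw [mul_pow, Real.sq_sqrt hJ, ← Real.rpow_natCast (t ^ _), ← Real.rpow_mul ht.le]
    have : -(b / 2) * ((2 : ℕ) : ℝ) = -b := by push_cast; ring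
    rw [this, mul_comm]
    exact h2

theorem int_mono_exp (ρ : Measure ℝ) [IsFiniteMeasure ρ] (hpos : ∀ᵐ s ∂ρ, 0 < s) (e e0 : ℝ)
    (he : 0 ≤ e) (hee : e ≤ e0) (h : Integrable (fun s : ℝ => s ^ (-e0)) ρ) :
    Integrable (fun s : ℝ => s ^ (-e)) ρ := by
  refine Integrable.mono' ((integrable_const (1:ℝ)).add h) (by fun_prop) ?_
  filter_upwards [hpos] with s hs
  rw [Real.norm_of_nonneg (by positivity)]
  simp only [Pi.add_apply]
  have h0 : 0 ≤ s ^ (-e0) := by positivity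
  rcases le_or_gt s 1 with h1 | h1
  · have := Real.rpow_le_rpow_of_exponent_ge hs h1 (neg_le_neg hee)
    linarith
  · have := Real.rpow_le_one_of_one_le_of_nonpos h1.le (neg_nonpos.2 he)
    linarith

theorem int_of_lint (ρ : Measure ℝ) (hpos : ∀ᵐ s ∂ρ, 0 < s) (e : ℝ)
    (h : ∫⁻ s, ENNReal.ofReal (s ^ e) ∂ρ < ⊤) : Integrable (fun s : ℝ => s ^ e) ρ := by
  refine ⟨by fun_prop, ?_⟩
  rw [hasFiniteIntegral_iff_ofReal]
  · exact h
  · filter_upwards [hpos] with s hs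
    exact Real.rpow_nonneg hs.le _

end Kern

/-- **Sufficient moment conditions for `I − Σ₀` to be trace class.** In the model `L²(ρ)`
with `T` the unique contraction satisfying `T∘M = M̃`: if for some `ε > 0` either
`∫ s⁻² dρ = 1` and `∫ s⁻⁴⁻ᵉ dρ < ∞`, or `∫ s⁻² dρ < 1` and `∫ s⁻²⁻ᵉ dρ < ∞`, then
`I − T` (and hence `I − T*`) is trace class. -/
theorem one_sub_Sigma0_traceClass
    (ρ : Measure ℝ) [IsFiniteMeasure ρ]
    (hcarr : ρ {s : ℝ | s ≤ 0} = 0)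
    (hbddsupp : ∃ b : ℝ, ρ {s : ℝ | b < s} = 0)
    (hnorm : ∫⁻ s, ENNReal.ofReal (s⁻¹ ^ 2) ∂ρ ≤ 1)
    (one : Lp ℂ 2 ρ)
    (hone : ∀ᵐ s ∂ρ, (one : ℝ → ℂ) s = 1)
    (M Mt : Lp ℂ 2 ρ →L[ℂ] Lp ℂ 2 ρ)
    (hM : ∀ f : Lp ℂ 2 ρ, ∀ᵐ s ∂ρ, (M f : ℝ → ℂ) s = (s : ℂ) * (f : ℝ → ℂ) s)
    (hMt_pos : Mt.IsPositive)
    (hMt_sq : ∀ f, Mt (Mt f) = M (M f) - ⟪one, f⟫_ℂ • one)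
    (T : Lp ℂ 2 ρ →L[ℂ] Lp ℂ 2 ρ) (hT : T.comp M = Mt)
    (ε : ℝ) (hε : 0 < ε)
    (hcase :
      ((∫⁻ s, ENNReal.ofReal (s⁻¹ ^ 2) ∂ρ) = 1 ∧
        (∫⁻ s, ENNReal.ofReal (s ^ (-(4 : ℝ) - ε)) ∂ρ) < ⊤) ∨
      ((∫⁻ s, ENNReal.ofReal (s⁻¹ ^ 2) ∂ρ) < 1 ∧
        (∫⁻ s, ENNReal.ofReal (s ^ (-(2 : ℝ) - ε)) ∂ρ) < ⊤)) :
    IsTraceClassOp (1 - T) ∧ IsTraceClassOp (1 - ContinuousLinearMap.adjoint T) := by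
  have hpos : ∀ᵐ s ∂ρ, 0 < s := by
    rw [ae_iff]; simpa using hcarr
  obtain ⟨b, hb⟩ := hbddsupp
  have hble : ∀ᵐ s ∂ρ, s ≤ b := by
    rw [ae_iff]; simpa using hb
  -- second moment
  have e2 : ∀ s : ℝ, 0 < s → s⁻¹ ^ 2 = s ^ (-(2 : ℝ)) := by
    intro s hs
    rw [Real.rpow_neg hs.le, inv_pow]; norm_cast
  have hl2 : ∫⁻ s, ENNReal.ofReal (s⁻¹ ^ 2) ∂ρ = ∫⁻ s, ENNReal.ofReal (s ^ (-(2 : ℝ))) ∂ρ := by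
    refine lintegral_congr_ae ?_
    filter_upwards [hpos] with s hs
    rw [e2 s hs]
  rw [hl2] at hnorm hcase
  have hI2 : Integrable (fun s : ℝ => s ^ (-(2 : ℝ))) ρ :=
    int_of_lint ρ hpos _ (hnorm.trans_lt ENNReal.one_lt_top)
  have hI0 : Integrable (fun s : ℝ => s ^ (-(0 : ℝ))) ρ :=
    int_mono_exp ρ hpos 0 2 le_rfl (by norm_num) hI2
  have hk2 : ∫ s, s ^ (-(2 : ℝ)) ∂ρ = (∫⁻ s, ENNReal.ofReal (s ^ (-(2 : ℝ))) ∂ρ).toReal := by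
    refine integral_eq_lintegral_of_nonneg_ae ?_ hI2.1
    filter_upwards [hpos] with s hs
    exact Real.rpow_nonneg hs.le _
  -- operator facts
  have hMsym : ∀ x y, ⟪M x, y⟫_ℂ = ⟪x, M y⟫_ℂ := by
    intro x y
    rw [L2.inner_def, L2.inner_def]
    refine integral_congr_ae ?_
    filter_upwards [hM x, hM y] with s h1 h2
    rw [h1, h2]
    simp only [RCLike.inner_apply, map_mul, Complex.conj_ofReal]
    ring
  have hMpos : 0 ≤ M := by
    rw [ContinuousLinearMap.nonneg_iff_isPositive]
    refine ⟨hMsym, fun x => ?_⟩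
    rw [ContinuousLinearMap.reApplyInnerSelf_apply, L2.inner_def]
    have : ∫ s, ⟪(M x : ℝ → ℂ) s, (x : ℝ → ℂ) s⟫_ℂ ∂ρ =
        ((∫ s, s * ‖(x : ℝ → ℂ) s‖ ^ 2 ∂ρ : ℝ) : ℂ) := by
      rw [← integral_complex_ofReal]
      refine integral_congr_ae ?_
      filter_upwards [hM x] with s h1
      rw [h1, ← smul_eq_mul, inner_smul_left, inner_self_eq_norm_sq_to_K, Complex.conj_ofReal]
      push_cast; rfl
    rw [this]
    change 0 ≤ (∫ s, s * ‖(x : ℝ → ℂ) s‖ ^ 2 ∂ρ : ℝ)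
    refine integral_nonneg_of_ae ?_
    filter_upwards [hpos] with s hs
    simp only [Pi.zero_apply]
    positivity
  have hMinj : ∀ x, M x = 0 → x = 0 := by
    intro x hx
    rw [Lp.eq_zero_iff_ae_eq_zero] at hx ⊢
    filter_upwards [hx, hM x, hpos] with s h1 h2 hs
    rw [h2] at h1
    have hsc : (s : ℂ) ≠ 0 := by exact_mod_cast hs.ne'
    simpa [hsc] using h1
  have hSpos : 0 ≤ Mt := (ContinuousLinearMap.nonneg_iff_isPositive Mt).2 hMt_pos
  -- kernels
  obtain ⟨g, hg, mg, bg⟩ := kernelLp ρ hpos 0 (by simpa using hI0)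
  obtain ⟨h, hh, mh, bh⟩ := kernelLp ρ hpos 1 (by simpa using hI2)
  let D : ℝ → ℝ := fun t => 1 - ∫ s, (s ^ 2 + t)⁻¹ ∂ρ
  have hgh : ∀ t > 0, M (h t) = g t := by
    intro t ht
    refine Lp.ext ?_
    filter_upwards [hM (h t), hh t ht, hg t ht, hpos] with s h1 h2 h3 hs
    rw [h1, h2, h3, ← Complex.ofReal_mul, Real.rpow_neg_one, neg_zero, Real.rpow_zero]
    congr 1
    field_simp
  have hgone : ∀ t : ℝ, t > 0 → (t : ℂ) • g t + M (M (g t)) = one := by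
    intro t ht
    refine Lp.ext ?_
    filter_upwards [Lp.coeFn_add ((t : ℂ) • g t) (M (M (g t))), Lp.coeFn_smul (t : ℂ) (g t),
      hM (M (g t)), hM (g t), hg t ht, hone] with s h1 h2 h3 h4 h5 h6
    rw [h1, Pi.add_apply, h2, Pi.smul_apply, h3, h4, h5, h6, smul_eq_mul, ← Complex.ofReal_mul,
      ← Complex.ofReal_mul, ← Complex.ofReal_mul, ← Complex.ofReal_add, neg_zero, Real.rpow_zero]
    have : s ^ 2 + t ≠ 0 := by positivity
    norm_cast
    field_simp
    ring
  have hintg : ∀ t > 0, Integrable (fun s : ℝ => (s ^ 2 + t)⁻¹) ρ := by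
    intro t ht
    refine Integrable.of_bound (C := t⁻¹) (by fun_prop) ?_
    filter_upwards with s
    rw [Real.norm_of_nonneg (by positivity)]
    gcongr
    nlinarith [sq_nonneg s]
  have hD : ∀ t > 0, (D t : ℂ) = 1 - ⟪one, g t⟫_ℂ := by
    intro t ht
    simp only [D]
    rw [Complex.ofReal_sub, Complex.ofReal_one, ← integral_complex_ofReal, L2.inner_def]
    congr 1
    refine integral_congr_ae ?_
    filter_upwards [hg t ht, hone] with s h1 h2
    rw [h1, h2]
    simp
  have mD : AEMeasurable D (volume.restrict (Set.Ioi 0)) := by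
    have hF : StronglyMeasurable (Function.uncurry fun t s : ℝ => (s ^ 2 + t)⁻¹) := by
      refine Measurable.stronglyMeasurable ?_
      simp only [Function.uncurry_def]
      fun_prop
    have hG := (hF.integral_prod_right (ν := ρ)).measurable
    exact (hG.const_sub 1).aemeasurable
  -- reduction
  have fin : ∀ (K0 p1 p2 q a1 a2 : ℝ), 0 ≤ K0 → 0 ≤ a1 → a1 ≤ 2 → 0 ≤ a2 → a2 ≤ 2 →
      p1 = -((2 - a1) / 2) → p2 = -((2 - a2) / 2) → -1 < 1/2 + p1 + p2 - q →
      Integrable (fun s : ℝ => s ^ (-(2 * a1 + 2 * 1))) ρ →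
      Integrable (fun s : ℝ => s ^ (-(2 * a2 + 2 * 0))) ρ →
      (∀ t > 0, 0 < D t) → (∀ t, 0 < t → t ≤ 1 → (D t)⁻¹ ≤ K0 * t ^ (-q)) →
      (∀ t, 1 < t → (D t)⁻¹ ≤ K0) →
      IsTraceClassOp (1 - T) ∧ IsTraceClassOp (1 - ContinuousLinearMap.adjoint T) := by
    intro K0 p1 p2 q a1 a2 hK0 ha1 ha1' ha2 ha2' hp1 hp2 hpq i1 i2 hDp bD bD'
    have c1 := bh a1 (2 - a1) ha1 (by linarith) (by ring) i1
    have c2 := bg a2 (2 - a2) ha2 (by linarith) (by ring) i2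
    have c3 := bh 0 2 le_rfl (by norm_num) (by ring) (by simpa using hI2)
    have c4 := bg 0 2 le_rfl (by norm_num) (by ring) (by simpa using hI0)
    rw [← hp1] at c1
    rw [← hp2] at c2
    have hm1 : (-(2 / 2) : ℝ) = -1 := by norm_num
    rw [hm1] at c3 c4
    set k1 := √(∫ s, s ^ (-(2 * a1 + 2 * 1)) ∂ρ)
    set k2 := √(∫ s, s ^ (-(2 * a2 + 2 * 0)) ∂ρ)
    set k3 := √(∫ s, s ^ (-(2 * (0:ℝ) + 2 * 1)) ∂ρ)
    set k4 := √(∫ s, s ^ (-(2 * (0:ℝ) + 2 * 0)) ∂ρ)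
    have n1 : 0 ≤ k1 := Real.sqrt_nonneg _
    have n2 : 0 ≤ k2 := Real.sqrt_nonneg _
    have n3 : 0 ≤ k3 := Real.sqrt_nonneg _
    have n4 : 0 ≤ k4 := Real.sqrt_nonneg _
    have : Fact ((2 : ℝ≥0∞) ≠ ⊤) := ⟨by simp⟩
    refine core one M Mt T hMpos hSpos hMinj hMt_sq hT g h D hgh hgone hD hDp mg mh mD
      (K0 + k1 + k2 + k3 + k4) p1 p2 q (by positivity) hpq ?_ ?_ ?_ ?_ ?_ ?_
    · intro t ht _
      refine (c1 t ht).trans ?_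
      gcongr; linarith
    · intro t ht _
      refine (c2 t ht).trans ?_
      gcongr; linarith
    · intro t ht ht1
      refine (bD t ht ht1).trans ?_
      gcongr; linarith
    · intro t ht
      have ht0 : 0 < t := by linarith
      refine (c3 t ht0).trans ?_
      gcongr; linarith
    · intro t ht
      have ht0 : 0 < t := by linarith
      refine (c4 t ht0).trans ?_
      gcongr; linarith
    · intro t ht
      refine (bD' t ht).trans ?_
      linarith
  set δ := min ε 1 with hδ
  have hδ0 : 0 < δ := lt_min hε one_pos
  have hδ1 : δ ≤ 1 := min_le_right _ _
  have hδε : δ ≤ ε := min_le_left _ _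
  rcases hcase with ⟨hk, hmom⟩ | ⟨hk, hmom⟩
  · have hk1 : ∫ s, s ^ (-(2 : ℝ)) ∂ρ = 1 := by rw [hk2, hk]; rfl
    have hIe : Integrable (fun s : ℝ => s ^ (-(4 + ε))) ρ := by
      refine int_of_lint ρ hpos _ ?_
      rw [neg_add']; exact hmom
    have hDlow : ∀ t > 0, t / (b ^ 2 + t) ≤ D t := by
      intro t ht
      have h1 : D t = ∫ s, (s ^ (-(2 : ℝ)) - (s ^ 2 + t)⁻¹) ∂ρ := by
        rw [integral_sub hI2 (hintg t ht), hk1]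
      have h2 : t / (b ^ 2 + t) = ∫ s, t / (b ^ 2 + t) * s ^ (-(2 : ℝ)) ∂ρ := by
        rw [integral_const_mul, hk1, mul_one]
      rw [h1, h2]
      refine integral_mono_ae (hI2.const_mul _) (hI2.sub (hintg t ht)) ?_
      filter_upwards [hpos, hble] with s hs hsb
      change t / (b ^ 2 + t) * s ^ (-(2 : ℝ)) ≤ s ^ (-(2 : ℝ)) - (s ^ 2 + t)⁻¹
      rw [← e2 s hs]
      have e : s⁻¹ ^ 2 - (s ^ 2 + t)⁻¹ = t / (s ^ 2 + t) * s⁻¹ ^ 2 := by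
        field_simp; ring
      rw [e]
      gcongr
    have hDp : ∀ t > 0, 0 < D t := fun t ht => lt_of_lt_of_le (by positivity) (hDlow t ht)
    have hDinv : ∀ t > 0, (D t)⁻¹ ≤ (b ^ 2 + t) / t := by
      intro t ht
      rw [← inv_div]
      exact inv_anti₀ (by positivity) (hDlow t ht)
    refine fin (b ^ 2 + 1) (-((2 - (1 + δ / 2)) / 2)) (-((2 - 2) / 2)) 1 (1 + δ / 2) 2
      (by positivity) (by positivity) (by linarith) (by norm_num) le_rfl rfl rfl (by linarith)
      ?_ ?_ hDp ?_ ?_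
    · exact int_mono_exp ρ hpos _ (4 + ε) (by positivity) (by linarith) hIe
    · exact int_mono_exp ρ hpos _ (4 + ε) (by positivity) (by linarith) hIe
    · intro t ht ht1
      refine (hDinv t ht).trans ?_
      rw [Real.rpow_neg_one, div_eq_mul_inv]
      gcongr
    · intro t ht
      have ht0 : 0 < t := by linarith
      refine (hDinv t ht0).trans ?_
      rw [div_le_iff₀ ht0]
      nlinarith [sq_nonneg b]
  · have hk1 : ∫ s, s ^ (-(2 : ℝ)) ∂ρ < 1 := by
      rw [hk2]
      exact (ENNReal.toReal_lt_toReal hk.ne_top ENNReal.one_ne_top).2 hk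
    set κ := ∫ s, s ^ (-(2 : ℝ)) ∂ρ
    have hIe : Integrable (fun s : ℝ => s ^ (-(2 + ε))) ρ := by
      refine int_of_lint ρ hpos _ ?_
      rw [neg_add']; exact hmom
    have hDlow : ∀ t > 0, 1 - κ ≤ D t := by
      intro t ht
      have : ∫ s, (s ^ 2 + t)⁻¹ ∂ρ ≤ κ := by
        refine integral_mono_ae (hintg t ht) hI2 ?_
        filter_upwards [hpos] with s hs
        rw [← e2 s hs, inv_pow]
        gcongr
        linarith
      simp only [D]; linarith
    have hκ : 0 < 1 - κ := by linarith
    have hDinv : ∀ t > 0, (D t)⁻¹ ≤ (1 - κ)⁻¹ := fun t ht => inv_anti₀ hκ (hDlow t ht)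
    refine fin (1 - κ)⁻¹ (-((2 - δ / 2) / 2)) (-((2 - (1 + δ / 2)) / 2)) 0 (δ / 2) (1 + δ / 2)
      (by positivity) (by positivity) (by linarith) (by positivity) (by linarith) rfl rfl
      (by linarith) ?_ ?_ (fun t ht => hκ.trans_le (hDlow t ht)) ?_ (fun t ht => hDinv t (by linarith))
    · exact int_mono_exp ρ hpos _ (2 + ε) (by positivity) (by linarith) hIe
    · exact int_mono_exp ρ hpos _ (2 + ε) (by positivity) (by linarith) hIe
    · intro t ht ht1
      rw [neg_zero, Real.rpow_zero, mul_one]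
      exact hDinv t ht
end

section
/- Let ρ, M, M̃ be as in the model context, and assume in addition that the support of ρ is contained in an interval [a, b] with 0 < a ≤ b < ∞ (i.e. supp ρ is separated away from 0). Let T be the unique contraction on L²(ρ) with T∘M = M̃. Then I − T is a trace class operator. -/
open MeasureTheory Filter
open scoped InnerProductSpace ENNReal

lemma aux_inv {H : Type*} [NormedAddCommGroup H] [InnerProductSpace ℂ H] [CompleteSpace H]
    (A : H →L[ℂ] H) (k d : ℝ) (hk : 0 < k) (hdk : d < k)
    (hA : ∀ f, ‖(k : ℂ) • f - A f‖ ≤ d * ‖f‖) :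
    ∃ R : H →L[ℂ] H, (∀ f, R (A f) = f) ∧ (∀ f, A (R f) = f) ∧
      ∀ f, ‖R f‖ ≤ (k - d)⁻¹ * ‖f‖ := by
  have hkc : (k : ℂ) ≠ 0 := by exact_mod_cast hk.ne'
  set E : H →L[ℂ] H := 1 - (k : ℂ)⁻¹ • A with hE
  have hEn : ‖E‖ < 1 := by
    have h1 : ‖E‖ ≤ max 0 (d / k) := by
      refine ContinuousLinearMap.opNorm_le_bound _ (le_max_left _ _) fun f => ?_
      have h2 : E f = (k : ℂ)⁻¹ • ((k : ℂ) • f - A f) := by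
        rw [smul_sub, inv_smul_smul₀ hkc]; rfl
      rw [h2, norm_smul, norm_inv, Complex.norm_real, Real.norm_of_nonneg hk.le]
      calc k⁻¹ * ‖(k : ℂ) • f - A f‖ ≤ k⁻¹ * (d * ‖f‖) := by gcongr; exact hA f
        _ = (d / k) * ‖f‖ := by ring
        _ ≤ _ := by gcongr; exact le_max_right _ _
    refine h1.trans_lt (max_lt one_pos ?_)
    rwa [div_lt_one hk]
  let u := Units.oneSub E hEn
  have hu : (u : H →L[ℂ] H) = (k : ℂ)⁻¹ • A := by
    simp [u, hE]
  have hu1 : ∀ f, (↑u⁻¹ : H →L[ℂ] H) ((k : ℂ)⁻¹ • A f) = f := fun f => by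
    have := congrArg (fun B : H →L[ℂ] H => B f) u.inv_mul
    simpa [hu] using this
  have hu2 : ∀ f, (k : ℂ)⁻¹ • A ((↑u⁻¹ : H →L[ℂ] H) f) = f := fun f => by
    have := congrArg (fun B : H →L[ℂ] H => B f) u.mul_inv
    rw [hu] at this
    exact this
  have hAR : ∀ f, A (((k : ℂ)⁻¹ • (↑u⁻¹ : H →L[ℂ] H)) f) = f := fun f => by
    simpa using hu2 f
  refine ⟨(k : ℂ)⁻¹ • (↑u⁻¹ : H →L[ℂ] H), fun f => ?_, hAR, fun f => ?_⟩
  · simpa using hu1 f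
  · set g := ((k : ℂ)⁻¹ • (↑u⁻¹ : H →L[ℂ] H)) f with hg
    have h1 := hA g
    rw [hAR f] at h1
    have h2 : ‖(k : ℂ) • g‖ = k * ‖g‖ := by
      rw [norm_smul, Complex.norm_real, Real.norm_of_nonneg hk.le]
    have h3 := norm_sub_norm_le ((k : ℂ) • g) f
    rw [inv_mul_eq_div, le_div_iff₀ (by linarith)]
    nlinarith

lemma aux_W {H : Type*} [NormedAddCommGroup H] [InnerProductSpace ℂ H] [CompleteSpace H]
    (Mt : H →L[ℂ] H) (hp : Mt.IsPositive) (c : ℝ) (hc : 0 ≤ c) (f : H) :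
    ‖(c : ℂ) • f - Mt f‖ ≤ Real.sqrt (c ^ 2 + ‖Mt‖ ^ 2) * ‖f‖ := by
  have h0 : 0 ≤ RCLike.re ⟪Mt f, f⟫_ℂ := hp.re_inner_nonneg_left f
  have h0' : 0 ≤ RCLike.re ⟪f, Mt f⟫_ℂ := hp.re_inner_nonneg_right f
  have h1 : ‖(c : ℂ) • f - Mt f‖ ^ 2 ≤ (c ^ 2 + ‖Mt‖ ^ 2) * ‖f‖ ^ 2 := by
    rw [@norm_sub_sq ℂ, norm_smul, inner_smul_left, Complex.norm_real, Real.norm_of_nonneg hc]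
    have h2 : RCLike.re ((starRingEnd ℂ) (c : ℂ) * ⟪f, Mt f⟫_ℂ)
        = c * RCLike.re ⟪f, Mt f⟫_ℂ := by simp
    rw [h2]
    have h3 : ‖Mt f‖ ^ 2 ≤ (‖Mt‖ * ‖f‖) ^ 2 := by gcongr; exact Mt.le_opNorm f
    nlinarith [mul_nonneg hc h0']
  refine abs_le_of_sq_le_sq' ?_ (by positivity) |>.2
  rw [mul_pow, Real.sq_sqrt (by positivity)]
  exact h1

lemma aux_main {H : Type*} [NormedAddCommGroup H] [InnerProductSpace ℂ H] [CompleteSpace H]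
    (a b : ℝ) (ha : 0 < a) (hab : a ≤ b) (one : H) (M Mt T : H →L[ℂ] H)
    (hM : ∀ f, ‖(b : ℂ) • f - M f‖ ≤ (b - a) * ‖f‖)
    (hp : Mt.IsPositive)
    (hsq : ∀ f, Mt (Mt f) = M (M f) - ⟪one, f⟫_ℂ • one)
    (hT : T.comp M = Mt) : IsTraceClassOp (1 - T) := by
  obtain ⟨N, -, hN, -⟩ := aux_inv M b (b - a) (by linarith) (by linarith) hM
  set c : ℝ := ‖Mt‖ ^ 2 / (2 * a) with hc
  have hc0 : 0 ≤ c := by positivity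
  have hca : 2 * a * c = ‖Mt‖ ^ 2 := by rw [hc]; field_simp
  obtain ⟨R, hR1, hR2, hR3⟩ := aux_inv (M + (c : ℂ) • 1) (b + c) (b - a) (by linarith)
    (by linarith) (fun f => by
      have : ((b + c : ℝ) : ℂ) • f - (M + (c : ℂ) • 1) f = (b : ℂ) • f - M f := by
        simp [add_smul]
      rw [this]; exact hM f)
  have hbc : b + c - (b - a) = a + c := by ring
  rw [hbc] at hR3
  set W : H →L[ℂ] H := (c : ℂ) • 1 - Mt with hW
  set w := Real.sqrt (c ^ 2 + ‖Mt‖ ^ 2) with hw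
  have hw0 : 0 ≤ w := Real.sqrt_nonneg _
  have hWn : ∀ f, ‖W f‖ ≤ w * ‖f‖ := fun f => by
    simpa [hW] using aux_W Mt hp c hc0 f
  have hwa : w < a + c := by
    rw [hw, Real.sqrt_lt' (by linarith)]
    nlinarith
  have hWs : ∀ f g, ⟪W f, g⟫_ℂ = ⟪f, W g⟫_ℂ := fun f g => by
    have := hp.isSymmetric f g
    simp only [ContinuousLinearMap.coe_coe] at this
    simp [hW, inner_sub_left, inner_sub_right, inner_smul_left, inner_smul_right, this]
  have hWns : ∀ n : ℕ, ∀ f g, ⟪(W ^ n) f, g⟫_ℂ = ⟪f, (W ^ n) g⟫_ℂ := by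
    intro n
    induction n with
    | zero => simp
    | succ n ih =>
      intro f g
      rw [pow_succ, ContinuousLinearMap.mul_apply, ih, hWs, ← ContinuousLinearMap.mul_apply,
        ← pow_succ', pow_succ]
  have hWnn : ∀ n : ℕ, ∀ f, ‖(W ^ n) f‖ ≤ w ^ n * ‖f‖ := by
    intro n
    induction n with
    | zero => simp
    | succ n ih =>
      intro f
      rw [pow_succ, ContinuousLinearMap.mul_apply]
      calc _ ≤ w ^ n * ‖W f‖ := ih _
        _ ≤ w ^ n * (w * ‖f‖) := by gcongr; exact hWn f
        _ = _ := by ring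
  have hRnn : ∀ n : ℕ, ∀ f, ‖(R ^ n) f‖ ≤ (a + c)⁻¹ ^ n * ‖f‖ := by
    intro n
    induction n with
    | zero => simp
    | succ n ih =>
      intro f
      rw [pow_succ, ContinuousLinearMap.mul_apply]
      have : 0 < a + c := by linarith
      calc _ ≤ (a + c)⁻¹ ^ n * ‖R f‖ := ih _
        _ ≤ (a + c)⁻¹ ^ n * ((a + c)⁻¹ * ‖f‖) := by gcongr; exact hR3 f
        _ = _ := by ring
  have hac : 0 < a + c := by linarith
  set r := w * (a + c)⁻¹ with hr
  have hr0 : 0 ≤ r := by positivity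
  have hr1 : r < 1 := by rw [hr, ← div_eq_mul_inv, div_lt_one hac]; exact hwa
  set D : H →L[ℂ] H := M - Mt with hD
  have hrec : ∀ f, D f = ⟪one, f⟫_ℂ • R one + R (D (W f)) := by
    intro f
    rw [← hR1 (D f), ← map_smul, ← map_add]
    congr 1
    simp only [hD, hW, ContinuousLinearMap.add_apply, ContinuousLinearMap.sub_apply,
      ContinuousLinearMap.smul_apply, ContinuousLinearMap.one_apply, map_sub, map_smul, hsq,
      smul_sub]
    abel
  have hpart : ∀ n : ℕ, ∀ f, D f = ∑ i ∈ Finset.range n,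
      ⟪(W ^ i) one, f⟫_ℂ • (R ^ (i + 1)) one + (R ^ n) (D ((W ^ n) f)) := by
    intro n
    induction n with
    | zero => simp
    | succ n ih =>
      intro f
      rw [Finset.sum_range_succ, ih f, hrec ((W ^ n) f), map_add, map_smul, hWns n,
        pow_succ R, pow_succ' W]
      simp only [ContinuousLinearMap.mul_apply]
      abel
  have hbnd : ∀ (K : ℝ) , Summable (fun n : ℕ => K * r ^ n) := fun K =>
    (summable_geometric_of_lt_one hr0 hr1).mul_left K
  set A := ContinuousLinearMap.adjoint N with hA
  have hsum : Summable (fun n : ℕ => ‖A ((W ^ n) one)‖ * ‖(R ^ (n + 1)) one‖) := by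
    refine Summable.of_nonneg_of_le (fun n => by positivity) (fun n => ?_)
      (hbnd (‖A‖ * ‖one‖ * (a + c)⁻¹ * ‖one‖))
    calc _ ≤ (‖A‖ * (w ^ n * ‖one‖)) * ((a + c)⁻¹ ^ (n + 1) * ‖one‖) := by
          gcongr
          · exact (A.le_opNorm _).trans (by gcongr; exact hWnn n one)
          · exact hRnn _ _
      _ = _ := by rw [hr]; ring
  refine ⟨fun n => A ((W ^ n) one), fun n => (R ^ (n + 1)) one, hsum, fun f => ?_⟩
  have hK : (1 - T) f = D (N f) := by
    rw [hD, ← hT]; simp [hN]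
  have hs : Summable (fun n : ℕ => ⟪A ((W ^ n) one), f⟫_ℂ • (R ^ (n + 1)) one) := by
    refine Summable.of_norm_bounded (hsum.mul_right ‖f‖) fun n => ?_
    rw [norm_smul]
    calc _ ≤ (‖A ((W ^ n) one)‖ * ‖f‖) * ‖(R ^ (n + 1)) one‖ := by
          gcongr; exact norm_inner_le_norm _ _
      _ = _ := by ring
  rw [hs.hasSum_iff_tendsto_nat, hK]
  have hlim : Tendsto (fun n : ℕ => (R ^ n) (D ((W ^ n) (N f)))) atTop (nhds 0) := by
    refine squeeze_zero_norm (a := fun n => (‖D‖ * ‖N f‖) * r ^ n) (fun n => ?_)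
      (hbnd _).tendsto_atTop_zero
    calc _ ≤ (a + c)⁻¹ ^ n * ‖D ((W ^ n) (N f))‖ := hRnn _ _
      _ ≤ (a + c)⁻¹ ^ n * (‖D‖ * (w ^ n * ‖N f‖)) := by
          gcongr
          exact (D.le_opNorm _).trans (by gcongr; exact hWnn n _)
      _ = _ := by rw [hr]; ring
  have h2 : Tendsto (fun n : ℕ => D (N f) - (R ^ n) (D ((W ^ n) (N f)))) atTop
      (nhds (D (N f) - 0)) := tendsto_const_nhds.sub hlim
  rw [sub_zero] at h2
  refine h2.congr fun n => ?_
  rw [sub_eq_iff_eq_add]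
  simp only [hA, ContinuousLinearMap.adjoint_inner_left]
  exact hpart n (N f)

/-- **If `supp ρ` is separated away from zero then `I − Σ₀` is trace class.** In the model
`L²(ρ)`, if additionally the support of `ρ` is contained in `[a, b]` with `0 < a ≤ b`,
then the unique contraction `T` with `T∘M = M̃` satisfies `I − T ∈ 𝐒₁`. -/
theorem one_sub_Sigma0_traceClass_of_support_away_from_zero
    (ρ : Measure ℝ) [IsFiniteMeasure ρ]
    (hcarr : ρ {s : ℝ | s ≤ 0} = 0)
    (hbddsupp : ∃ b : ℝ, ρ {s : ℝ | b < s} = 0)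
    (hnorm : ∫⁻ s, ENNReal.ofReal (s⁻¹ ^ 2) ∂ρ ≤ 1)
    (a b : ℝ) (ha : 0 < a) (hab : a ≤ b)
    (hsupp : ρ (Set.Icc a b)ᶜ = 0)
    (one : Lp ℂ 2 ρ)
    (hone : ∀ᵐ s ∂ρ, (one : ℝ → ℂ) s = 1)
    (M Mt : Lp ℂ 2 ρ →L[ℂ] Lp ℂ 2 ρ)
    (hM : ∀ f : Lp ℂ 2 ρ, ∀ᵐ s ∂ρ, (M f : ℝ → ℂ) s = (s : ℂ) * (f : ℝ → ℂ) s)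
    (hMt_pos : Mt.IsPositive)
    (hMt_sq : ∀ f, Mt (Mt f) = M (M f) - ⟪one, f⟫_ℂ • one)
    (T : Lp ℂ 2 ρ →L[ℂ] Lp ℂ 2 ρ) (hT : T.comp M = Mt) :
    IsTraceClassOp (1 - T) := by
  refine aux_main a b ha hab one M Mt T (fun f => ?_) hMt_pos hMt_sq hT
  refine Lp.norm_le_mul_norm_of_ae_le_mul ?_
  have hs : ∀ᵐ s ∂ρ, s ∈ Set.Icc a b := by
    rw [ae_iff]; exact hsupp
  filter_upwards [hs, hM f, Lp.coeFn_sub ((b : ℂ) • f) (M f), Lp.coeFn_smul (b : ℂ) f]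
    with s hs h1 h2 h3
  rw [h2, Pi.sub_apply, h3, Pi.smul_apply, h1, smul_eq_mul, ← sub_mul, norm_mul]
  gcongr
  rw [← Complex.ofReal_sub, Complex.norm_real, Real.norm_of_nonneg (by linarith [hs.2])]
  linarith [hs.1]
end

section
/- Fix an integer N ≥ 1 and let Γ be the Hankel operator on ℓ²(ℕ, ℂ) whose matrix entries are γ_{j+k}, where γ_{N−1} = γ_N = 1 and γ_m = 0 for all other m (so Γ has finite rank and symbol u := Γe₀ = e_{N−1} + e_N). Let H := Γ∘C be the associated anti-linear Hankel operator. Then the N+1 vectors (H²)ᵏ u, k = 0, 1, …, N, are linearly independent. (Consequently u is a cyclic vector for the restriction of H² to the (N+1)-dimensional range of H, i.e. this Hankel operator has simple spectrum in the sense of the paper.) -/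
open scoped ComplexConjugate InnerProductSpace

/-- **An explicit Hankel operator with simple spectrum.** Let `Γ` be the Hankel operator on
`ℓ²(ℕ, ℂ)` with matrix entries `γ_{j+k}` where `γ_{N−1} = γ_N = 1` and all other `γ_m = 0`
(so its symbol is `u = e_{N−1} + e_N`), and let `H = Γ∘C` be the associated anti-linear
Hankel operator. Then the `N+1` vectors `(H²)ᵏ u`, `k = 0, …, N`, are linearly
independent; consequently `u` is cyclic for the restriction of `H²` to the range of `H`. -/
theorem explicit_hankel_simple_spectrum
    (N : ℕ) (hN : 1 ≤ N)
    (e : ℕ → lp (fun _ : ℕ => ℂ) 2)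
    (he : ∀ n m : ℕ, e n m = if n = m then 1 else 0)
    (S Sstar Γ : lp (fun _ : ℕ => ℂ) 2 →L[ℂ] lp (fun _ : ℕ => ℂ) 2)
    (hS0 : ∀ x : lp (fun _ : ℕ => ℂ) 2, S x 0 = 0)
    (hSsucc : ∀ (x : lp (fun _ : ℕ => ℂ) 2) (n : ℕ), S x (n + 1) = x n)
    (hSstar : ∀ (x : lp (fun _ : ℕ => ℂ) 2) (n : ℕ), Sstar x n = x (n + 1))
    (hHankel : ∀ x : lp (fun _ : ℕ => ℂ) 2, Γ (S x) = Sstar (Γ x))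
    (hmat : ∀ j k : ℕ, Γ (e j) k = if j + k + 1 = N ∨ j + k = N then 1 else 0)
    (C : lp (fun _ : ℕ => ℂ) 2 → lp (fun _ : ℕ => ℂ) 2)
    (hC : ∀ (x : lp (fun _ : ℕ => ℂ) 2) (n : ℕ), C x n = conj (x n))
    (H : lp (fun _ : ℕ => ℂ) 2 → lp (fun _ : ℕ => ℂ) 2)
    (hH : ∀ x, H x = Γ (C x))
    (u : lp (fun _ : ℕ => ℂ) 2) (hu : u = H (e 0)) :
    LinearIndependent ℂ (fun k : Fin (N + 1) => (fun x => H (H x))^[(k : ℕ)] u) := by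
  classical
  have hΓ : ∀ x : lp (fun _ : ℕ => ℂ) 2, (∀ n, N < n → x n = 0) → ∀ k, Γ x k =
      (if k + 1 ≤ N then x (N - 1 - k) else 0) + (if k ≤ N then x (N - k) else 0) := by
    intro x hx k
    have hsum : x = ∑ j ∈ Finset.range (N + 1), x j • e j := by
      apply lp.ext
      funext n
      rw [lp.coeFn_sum, Finset.sum_apply]
      simp only [lp.coeFn_smul, Pi.smul_apply, he, smul_eq_mul, mul_ite, mul_one, mul_zero,
        Finset.sum_ite_eq', Finset.mem_range]
      split_ifs with h
      · rfl
      · exact hx n (by omega)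
    have h2 : Γ x k = ∑ j ∈ Finset.range (N + 1), x j *
        (if j + k + 1 = N ∨ j + k = N then 1 else 0) := by
      conv_lhs => rw [hsum]
      rw [map_sum, lp.coeFn_sum, Finset.sum_apply]
      simp only [map_smul, lp.coeFn_smul, Pi.smul_apply, hmat, smul_eq_mul]
    have h3 : ∀ j, x j * (if j + k + 1 = N ∨ j + k = N then (1 : ℂ) else 0) =
        (if j = N - 1 - k then (if k + 1 ≤ N then x j else 0) else 0)
        + (if j = N - k then (if k ≤ N then x j else 0) else 0) := by
      intro j
      by_cases h1 : j + k + 1 = N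
      · have : j = N - 1 - k := by omega
        have h' : k + 1 ≤ N := by omega
        have h'' : j ≠ N - k := by omega
        rw [if_pos (Or.inl h1), if_pos this, if_pos h', if_neg h'']; ring
      · by_cases h2 : j + k = N
        · have : j = N - k := by omega
          have h' : k ≤ N := by omega
          rw [if_pos (Or.inr h2), if_pos this, if_pos h']
          by_cases h4 : k + 1 ≤ N
          · have h'' : j ≠ N - 1 - k := by omega
            rw [if_neg h'']; ring
          · rw [if_neg h4]; simp
        · rw [if_neg (by tauto)]
          have a1 : ¬ (j = N - 1 - k ∧ k + 1 ≤ N) := by omega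
          have a2 : ¬ (j = N - k ∧ k ≤ N) := by omega
          rw [← ite_and, ← ite_and, if_neg a1, if_neg a2]; ring
    rw [h2, Finset.sum_congr rfl (fun j _ => h3 j), Finset.sum_add_distrib,
      Finset.sum_ite_eq', Finset.sum_ite_eq', if_pos (Finset.mem_range.2 (by omega)),
      if_pos (Finset.mem_range.2 (by omega))]
  have hsupp : ∀ x : lp (fun _ : ℕ => ℂ) 2, (∀ n, N < n → x n = 0) →
      ∀ n, N < n → Γ x n = 0 := by
    intro x hx n hn
    rw [hΓ x hx, if_neg (by omega), if_neg (by omega), add_zero]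
  have hreal : ∀ x : lp (fun _ : ℕ => ℂ) 2, (∀ n, N < n → x n = 0) → C x = x →
      C (Γ x) = Γ x := by
    intro x hx hc
    have hc' : ∀ n, conj (x n) = x n := fun n => by rw [← hC, hc]
    apply lp.ext
    funext n
    rw [hC, hΓ x hx, map_add]
    congr 1 <;> split_ifs <;> simp [hc']
  have hinj : ∀ x : lp (fun _ : ℕ => ℂ) 2, (∀ n, N < n → x n = 0) → Γ x = 0 → x = 0 := by
    intro x hx h0
    have hk : ∀ k, (if k + 1 ≤ N then x (N - 1 - k) else 0)
        + (if k ≤ N then x (N - k) else 0) = 0 := by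
      intro k
      rw [← hΓ x hx k, h0]; rfl
    have hz : ∀ n, n ≤ N → x n = 0 := by
      intro n
      induction n with
      | zero =>
        intro _
        have := hk N
        rw [if_neg (by omega), if_pos le_rfl, Nat.sub_self, zero_add] at this
        exact this
      | succ n ih =>
        intro hn
        have := hk (N - (n + 1))
        rw [if_pos (by omega), if_pos (by omega), show N - 1 - (N - (n + 1)) = n by omega,
          show N - (N - (n + 1)) = n + 1 by omega, ih (by omega), zero_add] at this
        exact this
    apply lp.ext
    funext n
    by_cases h : n ≤ N
    · exact hz n h
    · exact hx n (by omega)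
  have hT : ∀ x : lp (fun _ : ℕ => ℂ) 2, (∀ n, N < n → x n = 0) → ∀ m, m < N →
      (∀ n, n ≤ m → x n = 0) → Γ (Γ x) m = x (m + 1) := by
    intro x hx m hm h0
    have e1 : Γ x (N - 1 - m) = x (m + 1) := by
      rw [hΓ x hx, if_pos (by omega), if_pos (by omega),
        show N - 1 - (N - 1 - m) = m by omega, show N - (N - 1 - m) = m + 1 by omega,
        h0 m le_rfl, zero_add]
    have e2 : Γ x (N - m) = 0 := by
      rw [hΓ x hx, h0 (N - 1 - (N - m)) (by omega), h0 (N - (N - m)) (by omega)]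
      simp
    rw [hΓ _ (hsupp x hx), e1, e2, if_pos (by omega), if_pos (by omega), add_zero]
  obtain ⟨w, hw0, hws⟩ : ∃ w : ℕ → lp (fun _ : ℕ => ℂ) 2,
      w 0 = e N ∧ ∀ k, w (k + 1) = Γ (Γ (w k)) :=
    ⟨fun k => (fun x => Γ (Γ x))^[k] (e N), rfl, fun k => Function.iterate_succ_apply' _ _ _⟩
  have hCe : ∀ j, C (e j) = e j := by
    intro j
    apply lp.ext
    funext n
    rw [hC, he]
    split_ifs <;> simp
  have hwR : ∀ k, (∀ n, N < n → w k n = 0) ∧ C (w k) = w k := by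
    intro k
    induction k with
    | zero =>
      rw [hw0]
      exact ⟨fun n hn => by rw [he, if_neg (by omega)], hCe N⟩
    | succ k ih =>
      rw [hws]
      exact ⟨hsupp _ (hsupp _ ih.1), hreal _ (hsupp _ ih.1) (hreal _ ih.1 ih.2)⟩
  have hHw : ∀ k, H (H (w k)) = w (k + 1) := by
    intro k
    rw [hH, hH, (hwR k).2, hreal _ (hwR k).1 (hwR k).2, hws]
  have hu1 : u = w 1 := by
    have : Γ (e N) = e 0 := by
      apply lp.ext
      funext n
      rw [hmat, he]
      congr 1
      apply propext
      omega
    rw [hu, hH, hCe, hws 0, hw0, this]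
  have hit : ∀ k, (fun x => H (H x))^[k] u = w (k + 1) := by
    intro k
    induction k with
    | zero => exact hu1
    | succ k ih => rw [Function.iterate_succ_apply', ih]; exact hHw _
  have htri : ∀ k, k ≤ N → w k (N - k) = 1 ∧ ∀ n, n < N - k → w k n = 0 := by
    intro k
    induction k with
    | zero =>
      intro _
      rw [hw0]
      exact ⟨by rw [he, if_pos (by omega)], fun n hn => by rw [he, if_neg (by omega)]⟩
    | succ k ih =>
      intro hk
      obtain ⟨h1, h2⟩ := ih (by omega)
      rw [hws]
      constructor
      · rw [hT _ (hwR k).1 _ (by omega) (fun n hn => h2 n (by omega)),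
          show N - (k + 1) + 1 = N - k by omega, h1]
      · intro n hn
        rw [hT _ (hwR k).1 _ (by omega) (fun m hm => h2 m (by omega)), h2 _ (by omega)]
  rw [Fintype.linearIndependent_iff]
  intro c hc
  simp only [hit, hws] at hc
  have hy : ∀ n, (∑ i : Fin (N + 1), c i • w i) n = ∑ i : Fin (N + 1), c i * w i n := by
    intro n
    rw [lp.coeFn_sum, Finset.sum_apply]
    simp only [lp.coeFn_smul, Pi.smul_apply, smul_eq_mul]
  have hys : ∀ n, N < n → (∑ i : Fin (N + 1), c i • w i) n = 0 := by
    intro n hn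
    rw [hy]
    exact Finset.sum_eq_zero fun i _ => by rw [(hwR i).1 n hn, mul_zero]
  have hy0 : ∑ i : Fin (N + 1), c i • w i = 0 := by
    apply hinj _ hys
    apply hinj _ (hsupp _ hys)
    rw [← hc]
    simp only [map_sum, map_smul]
  by_contra hne
  push Not at hne
  obtain ⟨i0, hi0⟩ := hne
  obtain ⟨k, hk, hmax⟩ := Finset.exists_max_image
    (Finset.univ.filter fun i => c i ≠ 0) id ⟨i0, by simpa using hi0⟩
  have hck : c k ≠ 0 := by simpa using hk
  apply hck
  have h1 := hy (N - k)
  rw [hy0, Finset.sum_eq_single k, (htri k (by omega)).1, mul_one] at h1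
  · rw [← h1]; rfl
  · intro i _ hik
    by_cases hci : c i = 0
    · rw [hci, zero_mul]
    · have hle : i ≤ k := hmax i (by simpa using hci)
      have hlt : (i : ℕ) < k := lt_of_le_of_ne hle (fun h => hik (Fin.ext h))
      rw [(htri i (by omega)).2 _ (by omega), mul_zero]
  · intro h
    exact absurd (Finset.mem_univ _) h
end

section
/- Let Γ be a Hankel operator on ℓ²(ℕ, ℂ), H := Γ∘C the associated anti-linear Hankel operator, H̃ := H∘S, and u := He₀ its symbol. Let K denote the closed linear span of {(H²)ⁿ u : n ≥ 0}. Assume that H maps K into K and that H̃ maps K into K. Then K equals the closure of the range of H; in particular, the closed linear span of {(H²)ⁿ u : n ≥ 0} and the closed linear span of {(H̃²)ⁿ u : n ≥ 0} both equal closure(Ran H), so the restrictions of H² and H̃² to closure(Ran H) have u as a common cyclic vector (i.e. they have simple spectrum). -/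
open scoped ComplexConjugate InnerProductSpace

/-- **Invariance of the cyclic subspace of the symbol forces simple spectrum.** For a
bounded Hankel operator `Γ` on `ℓ²(ℕ, ℂ)` with anti-linear Hankel operator `H = Γ∘C`,
truncation `H̃ = H∘S` and symbol `u = H e₀`, let `K` be the closed linear span of
`{(H²)ⁿ u : n ≥ 0}`. If `H(K) ⊆ K` and `H̃(K) ⊆ K`, then `K = closure (Ran H)`; in
particular the closed spans of `{(H²)ⁿ u}` and of `{(H̃²)ⁿ u}` both equal
`closure (Ran H)`, so `u` is a common cyclic vector of the restrictions of `H²` and `H̃²`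
to `closure (Ran H)`. -/
theorem simple_spectrum_of_invariant_cyclic_subspace
    (S Sstar Γ : lp (fun _ : ℕ => ℂ) 2 →L[ℂ] lp (fun _ : ℕ => ℂ) 2)
    (hS0 : ∀ x : lp (fun _ : ℕ => ℂ) 2, S x 0 = 0)
    (hSsucc : ∀ (x : lp (fun _ : ℕ => ℂ) 2) (n : ℕ), S x (n + 1) = x n)
    (hSstar : ∀ (x : lp (fun _ : ℕ => ℂ) 2) (n : ℕ), Sstar x n = x (n + 1))
    (hHankel : ∀ x : lp (fun _ : ℕ => ℂ) 2, Γ (S x) = Sstar (Γ x))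
    (C : lp (fun _ : ℕ => ℂ) 2 → lp (fun _ : ℕ => ℂ) 2)
    (hC : ∀ (x : lp (fun _ : ℕ => ℂ) 2) (n : ℕ), C x n = conj (x n))
    (H : lp (fun _ : ℕ => ℂ) 2 → lp (fun _ : ℕ => ℂ) 2)
    (hH : ∀ x, H x = Γ (C x))
    (e0 : lp (fun _ : ℕ => ℂ) 2) (he0 : e0 0 = 1) (he0' : ∀ n : ℕ, n ≠ 0 → e0 n = 0)
    (u : lp (fun _ : ℕ => ℂ) 2) (hu : u = H e0)
    (K : Set (lp (fun _ : ℕ => ℂ) 2))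
    (hK : K = closure ((Submodule.span ℂ
        (Set.range fun n : ℕ => (fun x => H (H x))^[n] u) :
          Submodule ℂ (lp (fun _ : ℕ => ℂ) 2)) : Set (lp (fun _ : ℕ => ℂ) 2)))
    (hHK : ∀ x ∈ K, H x ∈ K)
    (hHtK : ∀ x ∈ K, H (S x) ∈ K) :
    K = closure (Set.range H) ∧
    closure ((Submodule.span ℂ
        (Set.range fun n : ℕ => (fun x => H (S (H (S x))))^[n] u) :
          Submodule ℂ (lp (fun _ : ℕ => ℂ) 2)) : Set (lp (fun _ : ℕ => ℂ) 2))
      = closure (Set.range H) := by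
  have hCC : ∀ x, C (C x) = x := by
    intro x; ext n; simp [hC]
  have hCadd : ∀ x y, C (x + y) = C x + C y := by
    intro x y; ext n; simp [hC]
  have hCsub : ∀ x y, C (x - y) = C x - C y := by
    intro x y; ext n; simp [hC]
  have hCsmul : ∀ (c : ℂ) x, C (c • x) = conj c • C x := by
    intro c x; ext n; simp [hC]
  have hCe0 : C e0 = e0 := by
    ext n
    rw [hC]
    by_cases h : n = 0
    · subst h; simp [he0]
    · simp [he0' n h]
  have hCS : ∀ x, C (S x) = S (C x) := by
    intro x; ext n
    rw [hC]
    cases n with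
    | zero => simp [hS0]
    | succ n => simp [hSsucc, hC]
  have hHS : ∀ x, H (S x) = Sstar (H x) := by
    intro x; rw [hH, hH, hCS, hHankel]
  have huΓ : u = Γ e0 := by rw [hu, hH, hCe0]
  -- basis vectors
  have hsing0 : lp.single 2 0 (1 : ℂ) = e0 := by
    ext n
    by_cases h : n = 0
    · subst h; simp [he0, lp.single_apply]
    · simp [he0' n h, lp.single_apply, h]
  have hSsing : ∀ m : ℕ, (lp.single 2 (m + 1) (1 : ℂ) : lp (fun _ : ℕ => ℂ) 2)
      = S (lp.single 2 m (1 : ℂ)) := by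
    intro m; ext n
    cases n with
    | zero => rw [hS0]; simp [lp.single_apply]
    | succ n => rw [hSsucc]; simp [lp.single_apply, Pi.single_apply]
  have hΓsing : ∀ m n : ℕ, Γ (lp.single 2 m (1 : ℂ)) n = u (m + n) := by
    intro m
    induction m with
    | zero => intro n; rw [hsing0, huΓ]; simp
    | succ m ih =>
      intro n
      rw [hSsing, hHankel, hSstar, ih, show m + (n + 1) = m + 1 + n by omega]
  have hΓsum : ∀ x : lp (fun _ : ℕ => ℂ) 2,
      HasSum (fun m => x m • Γ (lp.single 2 m (1 : ℂ))) (Γ x) := by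
    intro x
    have h := (lp.hasSum_single (p := 2) (by simp) x).mapL Γ
    refine h.congr_fun ?_
    intro m
    rw [← map_smul, ← lp.single_smul]; simp
  have hcoord : ∀ (x : lp (fun _ : ℕ => ℂ) 2) (n : ℕ),
      x n = ⟪(lp.single 2 n (1 : ℂ) : lp (fun _ : ℕ => ℂ) 2), x⟫_ℂ := by
    intro x n
    rw [lp.inner_single_left]; simp
  have key : ∀ (x : lp (fun _ : ℕ => ℂ) 2) (n : ℕ),
      Γ x n = ⟪C x, Γ (lp.single 2 n (1 : ℂ))⟫_ℂ := by
    intro x n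
    have h1 := (hΓsum x).mapL (innerSL ℂ (lp.single 2 n (1 : ℂ) : lp (fun _ : ℕ => ℂ) 2))
    have h2 := lp.hasSum_inner (𝕜 := ℂ) (C x) (Γ (lp.single 2 n (1 : ℂ)))
    rw [hcoord]
    refine h1.unique (h2.congr_fun ?_)
    intro m
    rw [innerSL_apply_apply, inner_smul_right]
    simp only [← hcoord, hΓsing, hC, RCLike.inner_apply,
      RCLike.conj_conj]
    rw [add_comm n m, mul_comm]
  have hadj : ∀ y, ContinuousLinearMap.adjoint Γ (C y) = C (Γ y) := by
    intro y; ext n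
    rw [hcoord, ContinuousLinearMap.adjoint_inner_right, hC, key, inner_conj_symm]
  have hsym0 : ∀ x y : lp (fun _ : ℕ => ℂ) 2, ⟪x, C y⟫_ℂ = ⟪y, C x⟫_ℂ := by
    intro x y
    rw [lp.inner_eq_tsum, lp.inner_eq_tsum]
    congr 1; ext n; simp [hC, mul_comm]
  have hsym : ∀ f g, ⟪H f, g⟫_ℂ = ⟪H g, f⟫_ℂ := by
    intro f g
    calc ⟪H f, g⟫_ℂ = ⟪Γ (C f), C (C g)⟫_ℂ := by rw [hH, hCC]
      _ = ⟪C f, C (Γ (C g))⟫_ℂ := by rw [← hadj, ContinuousLinearMap.adjoint_inner_right]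
      _ = ⟪H g, f⟫_ℂ := by rw [hsym0, hCC, hH]
  have hHadd : ∀ x y, H (x + y) = H x + H y := by
    intro x y; simp only [hH, hCadd, map_add]
  have hHsub : ∀ x y, H (x - y) = H x - H y := by
    intro x y; simp only [hH, hCsub, map_sub]
  have hHsmul : ∀ (c : ℂ) x, H (c • x) = conj c • H x := by
    intro c x; simp only [hH, hCsmul, map_smul]
  let T : lp (fun _ : ℕ => ℂ) 2 →ₗ[ℂ] lp (fun _ : ℕ => ℂ) 2 :=
    { toFun := fun x => H (H x)
      map_add' := by intro x y; simp only [hHadd]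
      map_smul' := by intro c x; simp [hHsmul] }
  let T' : lp (fun _ : ℕ => ℂ) 2 →ₗ[ℂ] lp (fun _ : ℕ => ℂ) 2 :=
    { toFun := fun x => H (S (H (S x)))
      map_add' := by intro x y; simp only [hHadd, map_add]
      map_smul' := by intro c x; simp [hHsmul] }
  have hTT' : ∀ x, T' x = T x - conj (H x 0) • u := by
    intro x
    change H (S (H (S x))) = H (H x) - conj (H x 0) • u
    have h : S (Sstar (H x)) = H x - (H x 0) • e0 := by
      ext n
      cases n with
      | zero =>
        rw [hS0]
        change (0 : ℂ) = H x 0 - H x 0 * e0 0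
        rw [he0]; ring
      | succ n =>
        rw [hSsucc, hSstar]
        change H x (n + 1) = H x (n + 1) - H x 0 * e0 (n + 1)
        rw [he0' _ (Nat.succ_ne_zero n)]; ring
    rw [hHS x, h, hHsub, hHsmul, ← hu]
  have hinv : ∀ (A : lp (fun _ : ℕ => ℂ) 2 →ₗ[ℂ] lp (fun _ : ℕ => ℂ) 2),
      ∀ x ∈ Submodule.span ℂ (Set.range fun n : ℕ => A^[n] u),
        A x ∈ Submodule.span ℂ (Set.range fun n : ℕ => A^[n] u) := by
    intro A x hx
    have : Submodule.span ℂ (Set.range fun n : ℕ => A^[n] u) ≤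
        (Submodule.span ℂ (Set.range fun n : ℕ => A^[n] u)).comap A := by
      rw [Submodule.span_le]
      rintro _ ⟨n, rfl⟩
      refine Submodule.subset_span ⟨n + 1, ?_⟩
      exact Function.iterate_succ_apply' _ _ _
    exact this hx
  have hmemu : ∀ (A : lp (fun _ : ℕ => ℂ) 2 →ₗ[ℂ] lp (fun _ : ℕ => ℂ) 2),
      u ∈ Submodule.span ℂ (Set.range fun n : ℕ => A^[n] u) :=
    fun A => Submodule.subset_span ⟨0, rfl⟩
  have hle : ∀ (A : lp (fun _ : ℕ => ℂ) 2 →ₗ[ℂ] lp (fun _ : ℕ => ℂ) 2)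
      (W : Submodule ℂ (lp (fun _ : ℕ => ℂ) 2)), u ∈ W → (∀ x ∈ W, A x ∈ W) →
      Submodule.span ℂ (Set.range fun n : ℕ => A^[n] u) ≤ W := by
    intro A W h0 h1
    rw [Submodule.span_le]
    rintro _ ⟨n, rfl⟩
    induction n with
    | zero => exact h0
    | succ n ih =>
      simp only [Function.iterate_succ_apply'] at ih ⊢
      exact h1 _ ih
  have hspan : Submodule.span ℂ (Set.range fun n : ℕ => T'^[n] u)
      = Submodule.span ℂ (Set.range fun n : ℕ => T^[n] u) := by
    apply le_antisymm
    · refine hle T' _ (hmemu T) fun x hx => ?_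
      rw [hTT']
      exact Submodule.sub_mem _ (hinv T x hx) (Submodule.smul_mem _ _ (hmemu T))
    · refine hle T _ (hmemu T') fun x hx => ?_
      have : T x = T' x + conj (H x 0) • u := by rw [hTT']; abel
      rw [this]
      exact Submodule.add_mem _ (hinv T' x hx) (Submodule.smul_mem _ _ (hmemu T'))
  obtain ⟨M, hM⟩ : ∃ M, M =
    (Submodule.span ℂ (Set.range fun n : ℕ => T^[n] u)).topologicalClosure := ⟨_, rfl⟩
  have hKM : K = (M : Set (lp (fun _ : ℕ => ℂ) 2)) := by
    rw [hK, hM, Submodule.topologicalClosure_coe]; rfl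
  have hMcl : IsClosed (M : Set (lp (fun _ : ℕ => ℂ) 2)) := by
    rw [hM]; exact Submodule.isClosed_topologicalClosure _
  have huM : u ∈ M := by rw [hM]; exact Submodule.le_topologicalClosure _ (hmemu T)
  have hHM : ∀ x ∈ M, H x ∈ M := by
    intro x hx
    have := hHK x (by rw [hKM]; exact hx)
    rwa [hKM] at this
  have hHtM : ∀ x ∈ M, H (S x) ∈ M := by
    intro x hx
    have := hHtK x (by rw [hKM]; exact hx)
    rwa [hKM] at this
  have hRange : Set.range H = (LinearMap.range Γ.toLinearMap : Set (lp (fun _ : ℕ => ℂ) 2)) := by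
    ext y; constructor
    · rintro ⟨x, rfl⟩; exact ⟨C x, (hH x).symm⟩
    · rintro ⟨x, rfl⟩; exact ⟨C x, by rw [hH, hCC]; rfl⟩
  have hMR : M ≤ (LinearMap.range Γ.toLinearMap).topologicalClosure := by
    rw [hM]
    apply Submodule.topologicalClosure_mono
    refine hle T _ ⟨e0, huΓ.symm⟩ fun x _ => ⟨C (H x), (hH _).symm⟩
  -- injectivity of `H` on `M`
  have hinj : ∀ z ∈ M, H z = 0 → z = 0 := by
    intro z hz h0
    have h1 : z ∈ (LinearMap.range Γ.toLinearMap)ᗮ := by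
      rw [Submodule.mem_orthogonal]
      rintro _ ⟨x, rfl⟩
      have := hsym (C x) z
      rw [hH (C x), hCC, h0, inner_zero_left] at this
      exact this
    rw [← Submodule.orthogonal_closure] at h1
    have := Submodule.inner_right_of_mem_orthogonal (hMR hz) h1
    exact inner_self_eq_zero.mp this
  -- `H²(M)` is dense in `M`
  have hdense : M ≤ (M.map T).topologicalClosure := by
    intro y hy
    have hNM : (M.map T).topologicalClosure ≤ M := by
      apply Submodule.topologicalClosure_minimal _ _ hMcl
      rintro _ ⟨x, hx, rfl⟩
      exact hHM _ (hHM _ hx)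
    have : CompleteSpace (M.map T).topologicalClosure :=
      (Submodule.isClosed_topologicalClosure _).completeSpace_coe
    obtain ⟨p, hp, z, hz, hpz⟩ :=
      Submodule.exists_add_mem_mem_orthogonal (K := (M.map T).topologicalClosure) y
    have hzM : z ∈ M := by
      have : z = y - p := by rw [hpz]; abel
      rw [this]; exact M.sub_mem hy (hNM hp)
    have h1 : ⟪T z, z⟫_ℂ = 0 := Submodule.inner_right_of_mem_orthogonal
      (Submodule.le_topologicalClosure _ (Submodule.mem_map_of_mem hzM)) hz
    have h2 : ⟪H z, H z⟫_ℂ = 0 := by rw [← h1]; exact (hsym (H z) z).symm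
    have h3 := hinj z hzM (inner_self_eq_zero.mp h2)
    rw [hpz, h3, add_zero]; exact hp
  have hSM : ∀ y ∈ M, Sstar y ∈ M := by
    have : (M.map T).topologicalClosure ≤ M.comap Sstar.toLinearMap := by
      apply Submodule.topologicalClosure_minimal
      · rintro _ ⟨x, hx, rfl⟩
        change Sstar (H (H x)) ∈ M
        rw [← hHS]
        exact hHtM _ (hHM _ hx)
      · exact hMcl.preimage Sstar.continuous
    exact fun y hy => this (hdense hy)
  have hΓM : ∀ m, Γ (lp.single 2 m (1 : ℂ)) ∈ M := by
    intro m
    induction m with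
    | zero => rw [hsing0, ← huΓ]; exact huM
    | succ m ih => rw [hSsing, hHankel]; exact hSM _ ih
  have hRM : (LinearMap.range Γ.toLinearMap) ≤ M := by
    rintro _ ⟨x, rfl⟩
    refine hMcl.mem_of_tendsto (hΓsum x) (Filter.Eventually.of_forall fun s => ?_)
    exact M.sum_mem fun m _ => M.smul_mem _ (hΓM m)
  have hfin : M = (LinearMap.range Γ.toLinearMap).topologicalClosure :=
    le_antisymm hMR (Submodule.topologicalClosure_minimal _ hRM hMcl)
  have hfinal : (M : Set (lp (fun _ : ℕ => ℂ) 2)) = closure (Set.range H) := by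
    rw [hRange, hfin, Submodule.topologicalClosure_coe]
  refine ⟨hKM.trans hfinal, ?_⟩
  rw [← hfinal, hM, ← hspan, Submodule.topologicalClosure_coe]
  rfl
end
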